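/- arXiv:1311.7343 — 3 statements merged into one kernel-verified Lean document; each statement's English description precedes it below -/
import Mathlib

section
/- (Real Demailly–Skoda) Let g be a metric on ℝⁿ with values in ℂ^{r×r}. If g is log concave in the sense of Griffiths, then the metric g·det g is log concave in the sense of Nakano. -/
open scoped ComplexOrder
open Matrix MeasureTheory

section Preamble

variable {ι : Type*} [Fintype ι] [DecidableEq ι] {r : ℕ}

/-- Partial derivative of a complex-valued function on `ι → ℝ` in direction `j`. -/
noncomputable def pdC (j : ι) (f : (ι → ℝ) → ℂ) (x : ι → ℝ) : ℂ :=
  fderiv ℝ f x (Pi.single j 1)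

/-- Partial derivative of a real-valued function on `ι → ℝ` in direction `j`. -/
noncomputable def pdR (j : ι) (f : (ι → ℝ) → ℝ) (x : ι → ℝ) : ℝ :=
  fderiv ℝ f x (Pi.single j 1)

/-- Entrywise partial derivative of a matrix-valued function. -/
noncomputable def mpd (j : ι) (g : (ι → ℝ) → Matrix (Fin r) (Fin r) ℂ) (x : ι → ℝ) :
    Matrix (Fin r) (Fin r) ℂ :=
  Matrix.of fun a b => pdC j (fun y => g y a b) x

/-- The curvature-type quantity `Θ_{jk} = ∂_{x_k}(g⁻¹ ∂_{x_j} g)`. -/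
noncomputable def Theta (g : (ι → ℝ) → Matrix (Fin r) (Fin r) ℂ) (j k : ι) (x : ι → ℝ) :
    Matrix (Fin r) (Fin r) ℂ :=
  mpd k (fun y => (g y)⁻¹ * mpd j g y) x

/-- The pairing `(u, v)_g = v* g u`. -/
noncomputable def ip (g : Matrix (Fin r) (Fin r) ℂ) (u v : Fin r → ℂ) : ℂ :=
  star v ⬝ᵥ g.mulVec u

/-- A metric: twice differentiable entries, Hermitian positive definite values. -/
def IsMetric (g : (ι → ℝ) → Matrix (Fin r) (Fin r) ℂ) : Prop :=
  (∀ x, (g x).PosDef) ∧ ∀ a b, ContDiff ℝ 2 fun x => g x a b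

/-- Log concavity in the sense of Nakano. -/
def NakanoLogConcave (g : (ι → ℝ) → Matrix (Fin r) (Fin r) ℂ) : Prop :=
  ∀ (x : ι → ℝ) (u : ι → Fin r → ℂ),
    ∑ j, ∑ k, ip (g x) ((Theta g j k x).mulVec (u j)) (u k) ≤ 0

/-- Log concavity in the sense of Griffiths. -/
def GriffithsLogConcave (g : (ι → ℝ) → Matrix (Fin r) (Fin r) ℂ) : Prop :=
  ∀ (x : ι → ℝ) (u : Fin r → ℂ) (v : ι → ℂ),
    ∑ j, ∑ k, ip (g x) ((Theta g j k x).mulVec u) u * (v j * star (v k)) ≤ 0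

end Preamble

noncomputable def ee : ZMod 3 → ℂ := fun t => ZMod.stdAddChar (N := 3) t

lemma star_ee (t : ZMod 3) : star (ee t) = ee (-t) := by
  unfold ee
  rw [AddChar.map_neg_eq_conj]; rfl

lemma ee_add (s t : ZMod 3) : ee (s + t) = ee s * ee t := by
  unfold ee
  rw [AddChar.map_add_eq_mul]

lemma char_sum {r : ℕ} (α μ β l : Fin r) :
    ∑ σ : Fin r → ZMod 3, ee (σ α + σ μ - σ β - σ l) =
      (3 : ℂ) ^ r * ((if α = β then (if μ = l then 1 else 0) else 0)
        + (if α = l then (if μ = β then 1 else 0) else 0)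
        - (if α = β then (if μ = l then (if α = l then 1 else 0) else 0) else 0)) := by
  classical
  let φ : (Fin r → ZMod 3) →+ ZMod 3 :=
    Pi.evalAddMonoidHom (fun _ => ZMod 3) α + Pi.evalAddMonoidHom (fun _ => ZMod 3) μ
      - Pi.evalAddMonoidHom (fun _ => ZMod 3) β - Pi.evalAddMonoidHom (fun _ => ZMod 3) l
  let ψ : AddChar (Fin r → ZMod 3) ℂ := (ZMod.stdAddChar (N := 3)).compAddMonoidHom φ
  have h := AddChar.sum_eq_ite ψ
  have h1 : ∀ σ, ψ σ = ee (σ α + σ μ - σ β - σ l) := fun σ => rfl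
  simp only [h1] at h
  rw [h]
  have h2 : ψ = 0 ↔ (α = β ∧ μ = l) ∨ (α = l ∧ μ = β) := by
    constructor
    · intro h0
      have h3 : ∀ σ : Fin r → ZMod 3, σ α + σ μ - σ β - σ l = 0 := by
        intro σ
        apply ZMod.injective_stdAddChar (N := 3)
        rw [AddChar.map_zero_eq_one]
        change ψ σ = 1
        rw [h0]; rfl
      have a1 := h3 (Pi.single α 1)
      have a2 := h3 (Pi.single μ 1)
      simp only [Pi.single_apply] at a1 a2
      revert a1 a2
      by_cases c1 : α = β <;> by_cases c2 : μ = l <;> by_cases c3 : α = l <;>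
        by_cases c4 : μ = β <;> by_cases c5 : μ = α <;> by_cases c6 : l = β <;>
        (try subst_vars) <;> simp_all [eq_comm] <;> decide
    · intro h0
      ext σ
      rw [h1]
      have : σ α + σ μ - σ β - σ l = 0 := by
        rcases h0 with ⟨rfl, rfl⟩ | ⟨rfl, rfl⟩ <;> ring
      rw [this]
      simp [ee]
  have h4 : ((Fintype.card (Fin r → ZMod 3) : ℕ) : ℂ) = 3 ^ r := by
    simp [ZMod.card]
  simp only [h2, h4]
  by_cases c1 : α = β <;> by_cases c2 : μ = l <;> by_cases c3 : α = l <;>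
        by_cases c4 : μ = β <;> simp_all

lemma avg_one {r : ℕ} (A : Matrix (Fin r) (Fin r) ℂ) (a b : Fin r → ℂ) :
    ∑ σ : Fin r → ZMod 3,
      (star (fun i => ee (σ i)) ⬝ᵥ A.mulVec (fun i => ee (σ i))) *
        ((∑ l, a l * ee (-σ l)) * star (∑ m, b m * ee (-σ m))) =
    (3 : ℂ) ^ r * (star b ⬝ᵥ A.mulVec a + A.trace * (star b ⬝ᵥ a)
      - ∑ i, A i i * (a i * star (b i))) := by
  have e1 : ∀ σ : Fin r → ZMod 3,
      (star (fun i => ee (σ i)) ⬝ᵥ A.mulVec (fun i => ee (σ i))) *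
        ((∑ l, a l * ee (-σ l)) * star (∑ m, b m * ee (-σ m))) =
      ∑ β, ∑ α, ∑ l, ∑ m, (A β α * a l * star (b m)) * ee (σ α + σ m - σ β - σ l) := by
    intro σ
    have hX : (star (fun i => ee (σ i)) ⬝ᵥ A.mulVec (fun i => ee (σ i))) =
        ∑ β, ∑ α, ee (-σ β) * (A β α * ee (σ α)) := by
      simp only [dotProduct, Matrix.mulVec, Finset.mul_sum, Pi.star_apply, star_ee]
    have hZ : star (∑ m, b m * ee (-σ m)) = ∑ m, star (b m) * ee (σ m) := by
      simp only [star_sum, star_mul', star_ee, neg_neg]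
    rw [hX, hZ, Finset.sum_mul_sum, Finset.sum_mul]
    refine Finset.sum_congr rfl fun β _ => ?_
    rw [Finset.sum_mul]
    refine Finset.sum_congr rfl fun α _ => ?_
    rw [Finset.mul_sum]
    refine Finset.sum_congr rfl fun l _ => ?_
    rw [Finset.mul_sum]
    refine Finset.sum_congr rfl fun m _ => ?_
    simp only [sub_eq_add_neg, ee_add]
    ring
  simp only [e1]
  rw [Finset.sum_comm]
  have e2 : ∀ β, ∑ σ : Fin r → ZMod 3, ∑ α, ∑ l, ∑ m,
      (A β α * a l * star (b m)) * ee (σ α + σ m - σ β - σ l) =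
      ∑ α, ∑ l, ∑ m, (A β α * a l * star (b m)) * ∑ σ : Fin r → ZMod 3,
        ee (σ α + σ m - σ β - σ l) := by
    intro β
    rw [Finset.sum_comm]
    refine Finset.sum_congr rfl fun α _ => ?_
    rw [Finset.sum_comm]
    refine Finset.sum_congr rfl fun l _ => ?_
    rw [Finset.sum_comm]
    refine Finset.sum_congr rfl fun m _ => ?_
    rw [Finset.mul_sum]
  simp only [e2, char_sum]
  have e3 : ∀ β α l m : Fin r, (A β α * a l * star (b m)) * ((3 : ℂ) ^ r *
      ((if α = β then (if m = l then 1 else 0) else 0)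
        + (if α = l then (if m = β then 1 else 0) else 0)
        - (if α = β then (if m = l then (if α = l then 1 else 0) else 0) else 0))) =
      3 ^ r * ((if α = β then (if m = l then (A β α * a l * star (b m)) else 0) else 0)
        + (if α = l then (if m = β then (A β α * a l * star (b m)) else 0) else 0)
        - (if α = β then (if m = l then (if α = l then (A β α * a l * star (b m)) else 0)
            else 0) else 0)) := by
    intro β α l m
    split_ifs <;> ring
  simp only [e3, ← Finset.mul_sum, Finset.sum_add_distrib, Finset.sum_sub_distrib]
  congr 1
  have f1 : ∑ β, ∑ α, ∑ l, ∑ m, (if α = β then (if m = l then (A β α * a l * star (b m)) else 0)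
      else 0) = A.trace * (star b ⬝ᵥ a) := by
    have : ∀ β, ∑ α, ∑ l, ∑ m, (if α = β then (if m = l then (A β α * a l * star (b m)) else 0)
      else 0) = ∑ l, A β β * a l * star (b l) := by
      intro β
      rw [Finset.sum_eq_single β]
      · simp
      · intro α _ h; simp [h]
      · simp
    simp only [this, Matrix.trace, dotProduct, Finset.sum_mul, Finset.mul_sum, Matrix.diag]
    rw [Finset.sum_comm]
    refine Finset.sum_congr rfl fun α _ => ?_
    refine Finset.sum_congr rfl fun l _ => ?_
    simp only [Pi.star_apply]; ring
  have f2 : ∑ β, ∑ α, ∑ l, ∑ m, (if α = l then (if m = β then (A β α * a l * star (b m)) else 0)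
      else 0) = star b ⬝ᵥ A.mulVec a := by
    have : ∀ β α, ∑ l, ∑ m, (if α = l then (if m = β then (A β α * a l * star (b m)) else 0)
      else 0) = A β α * a α * star (b β) := by
      intro β α
      rw [Finset.sum_eq_single α]
      · simp
      · intro l _ h; simp [h.symm]
      · simp
    simp only [this, Matrix.mulVec, dotProduct, Finset.mul_sum]
    refine Finset.sum_congr rfl fun α _ => ?_
    refine Finset.sum_congr rfl fun l _ => ?_
    simp only [Pi.star_apply]; ring
  have f3 : ∑ β, ∑ α, ∑ l, ∑ m, (if α = β then (if m = l then (if α = l then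
      (A β α * a l * star (b m)) else 0) else 0) else 0) = ∑ i, A i i * (a i * star (b i)) := by
    refine Finset.sum_congr rfl fun β _ => ?_
    rw [Finset.sum_eq_single β]
    · rw [Finset.sum_eq_single β]
      · simp [mul_assoc]
      · intro l _ h; simp [h.symm]
      · simp
    · intro α _ h; simp [h]
    · simp
  rw [f1, f2, f3]
  ring

lemma demailly_skoda_one {n r : ℕ} (H : Fin n → Fin n → Matrix (Fin r) (Fin r) ℂ)
    (hG : ∀ (u : Fin r → ℂ) (v : Fin n → ℂ),
      ∑ j, ∑ k, (star u ⬝ᵥ (H j k).mulVec u) * (v j * star (v k)) ≤ 0)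
    (u : Fin n → Fin r → ℂ) :
    ∑ j, ∑ k, (star (u k) ⬝ᵥ (H j k).mulVec (u j) + (H j k).trace * (star (u k) ⬝ᵥ u j)) ≤ 0 := by
  have h1 : ∑ σ : Fin r → ZMod 3, ∑ j, ∑ k,
      (star (fun i => ee (σ i)) ⬝ᵥ (H j k).mulVec (fun i => ee (σ i))) *
        ((∑ l, u j l * ee (-σ l)) * star (∑ m, u k m * ee (-σ m))) ≤ 0 :=
    Finset.sum_nonpos fun σ _ => hG _ (fun j => ∑ l, u j l * ee (-σ l))
  have h2 : ∑ i, ∑ j, ∑ k, H j k i i * (u j i * star (u k i)) ≤ 0 := by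
    refine Finset.sum_nonpos fun i _ => ?_
    have := hG (Pi.single i 1) (fun j => u j i)
    simpa [← Pi.single_star] using this
  rw [Finset.sum_comm] at h1 h2
  have h3 : ∀ j, ∑ σ : Fin r → ZMod 3, ∑ k,
      (star (fun i => ee (σ i)) ⬝ᵥ (H j k).mulVec (fun i => ee (σ i))) *
        ((∑ l, u j l * ee (-σ l)) * star (∑ m, u k m * ee (-σ m))) =
      ∑ k, (3 : ℂ) ^ r * (star (u k) ⬝ᵥ (H j k).mulVec (u j) + (H j k).trace * (star (u k) ⬝ᵥ u j)
      - ∑ i, H j k i i * (u j i * star (u k i))) := by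
    intro j
    rw [Finset.sum_comm]
    simp only [avg_one]
  have h4 : ∀ j, ∑ i, ∑ k, H j k i i * (u j i * star (u k i)) =
      ∑ k, ∑ i, H j k i i * (u j i * star (u k i)) := fun j => Finset.sum_comm
  simp only [h3, ← Finset.mul_sum] at h1
  simp only [h4] at h2
  have h5 : ∑ j, ∑ k, (star (u k) ⬝ᵥ (H j k).mulVec (u j) + (H j k).trace * (star (u k) ⬝ᵥ u j)
      - ∑ i, H j k i i * (u j i * star (u k i))) ≤ 0 := by
    have h3p : (0 : ℂ) < (3 : ℂ)⁻¹ ^ r := by positivity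
    have h6 := mul_nonpos_of_nonneg_of_nonpos h3p.le h1
    rwa [← mul_assoc, ← mul_pow, inv_mul_cancel₀ (by norm_num), one_pow, one_mul] at h6
  simp only [Finset.sum_sub_distrib] at h5
  exact (sub_nonpos.mp h5).trans h2

lemma demailly_skoda {n r : ℕ} (g : Matrix (Fin r) (Fin r) ℂ) (hg : g.PosDef)
    (T : Fin n → Fin n → Matrix (Fin r) (Fin r) ℂ)
    (hG : ∀ (u : Fin r → ℂ) (v : Fin n → ℂ),
      ∑ j, ∑ k, ip g ((T j k).mulVec u) u * (v j * star (v k)) ≤ 0)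
    (u : Fin n → Fin r → ℂ) :
    ∑ j, ∑ k, ip g ((T j k + (T j k).trace • 1).mulVec (u j)) (u k) ≤ 0 := by
  obtain ⟨B, hB, hgB⟩ : ∃ B : Matrix (Fin r) (Fin r) ℂ, IsUnit B.det ∧ g = Bᴴ * B := by
    open scoped MatrixOrder in
    obtain ⟨B, hB⟩ := CStarAlgebra.nonneg_iff_eq_star_mul_self.mp hg.posSemidef.nonneg
    refine ⟨B, ?_, hB⟩
    have h := hg.det_pos.ne'
    rw [hB, Matrix.det_mul] at h
    exact isUnit_iff_ne_zero.mpr (right_ne_zero_of_mul h)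
  have hip : ∀ a b, ip g a b = star (B.mulVec b) ⬝ᵥ B.mulVec a := by
    intro a b
    rw [ip, hgB, ← Matrix.mulVec_mulVec, Matrix.star_mulVec, ← Matrix.dotProduct_mulVec]
  have key := demailly_skoda_one (fun j k => B * T j k * B⁻¹) (fun w v => by
    have := hG (B⁻¹.mulVec w) v
    simpa [hip, Matrix.mulVec_mulVec, Matrix.mul_assoc, Matrix.mul_nonsing_inv _ hB] using this)
    (fun j => B.mulVec (u j))
  convert key using 4 with j _ k _
  have ht : (B * T j k * B⁻¹).trace = (T j k).trace := by
    rw [Matrix.trace_mul_comm, ← Matrix.mul_assoc, Matrix.nonsing_inv_mul _ hB, Matrix.one_mul]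
  rw [ht, hip, Matrix.add_mulVec, Matrix.smul_mulVec, Matrix.one_mulVec, Matrix.mulVec_add,
    Matrix.mulVec_smul, dotProduct_add, dotProduct_smul, smul_eq_mul]
  simp [Matrix.mulVec_mulVec, Matrix.mul_assoc, Matrix.nonsing_inv_mul _ hB]

section Ana
variable {n r : ℕ}

noncomputable def detC (r : ℕ) : ContinuousMultilinearMap ℂ (fun _ : Fin r => (Fin r → ℂ)) ℂ where
  toMultilinearMap := (Matrix.detRowAlternating (n := Fin r) (R := ℂ)).toMultilinearMap
  cont := by
    have : Continuous fun A : Matrix (Fin r) (Fin r) ℂ => A.det := continuous_id.matrix_det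
    exact this

lemma pdC_det (g : (Fin n → ℝ) → Matrix (Fin r) (Fin r) ℂ) (x : Fin n → ℝ)
    (hd : ∀ a b, DifferentiableAt ℝ (fun y => g y a b) x) (j : Fin n) :
    DifferentiableAt ℝ (fun y => (g y).det) x ∧
    pdC j (fun y => (g y).det) x = ((g x).adjugate * mpd j g x).trace := by
  let G : (Fin n → ℝ) → (Fin r → Fin r → ℂ) := fun y => g y
  have hG : HasFDerivAt G (ContinuousLinearMap.pi fun a => ContinuousLinearMap.pi fun b =>
      fderiv ℝ (fun y => g y a b) x) x := by
    refine hasFDerivAt_pi.mpr fun a => hasFDerivAt_pi.mpr fun b => (hd a b).hasFDerivAt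
  have h1 := (((detC r).hasFDerivAt (x := G x)).restrictScalars ℝ).comp x hG
  have h2 : HasFDerivAt (fun y => (g y).det) _ x := h1
  refine ⟨h2.differentiableAt, ?_⟩
  rw [pdC, h2.fderiv]
  change (detC r).linearDeriv (G x) (fun a b => fderiv ℝ (fun y => g y a b) x (Pi.single j 1)) = _
  rw [ContinuousMultilinearMap.linearDeriv_apply]
  have h3 : ∀ i (w : Fin r → ℂ), detC r (Function.update (G x) i w) =
      ∑ k, (g x).adjugate k i * w k := by
    intro i w
    change ((g x).updateRow i w).det = _
    rw [← Matrix.cramer_transpose_apply, Matrix.cramer_eq_adjugate_mulVec,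
      ← Matrix.adjugate_transpose]
    rfl
  simp only [h3, Matrix.trace, Matrix.diag, Matrix.mul_apply]
  rw [Finset.sum_comm]
  rfl

lemma contDiff_det {m : WithTop ℕ∞} {f : (Fin n → ℝ) → Matrix (Fin r) (Fin r) ℂ}
    (hf : ∀ a b, ContDiff ℝ m fun x => f x a b) : ContDiff ℝ m fun x => (f x).det := by
  simp only [Matrix.det_apply']
  exact ContDiff.sum fun σ _ => contDiff_const.mul (contDiff_prod fun i _ => hf _ _)

lemma contDiff_inv_entry {g : (Fin n → ℝ) → Matrix (Fin r) (Fin r) ℂ} (hg : IsMetric g)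
    (a b : Fin r) : ContDiff ℝ 2 fun x => (g x)⁻¹ a b := by
  have h : ∀ x, (g x)⁻¹ a b = ((g x).det)⁻¹ * ((g x).updateRow b (Pi.single a 1)).det := by
    intro x
    rw [Matrix.inv_def, Matrix.smul_apply, Matrix.adjugate_apply, smul_eq_mul,
      Ring.inverse_eq_inv']
  simp only [h]
  refine ((contDiff_det hg.2).inv fun x => (hg.1 x).det_pos.ne').mul (contDiff_det fun c d => ?_)
  by_cases hc : c = b
  · subst hc; simp [contDiff_const]
  · simp [Matrix.updateRow_ne hc, hg.2]

lemma contDiff_mpd {g : (Fin n → ℝ) → Matrix (Fin r) (Fin r) ℂ} (hg : IsMetric g) (j : Fin n)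
    (a b : Fin r) : ContDiff ℝ 1 fun x => mpd j g x a b := by
  change ContDiff ℝ 1 fun x => fderiv ℝ (fun y => g y a b) x (Pi.single j 1)
  exact ((hg.2 a b).fderiv_right (m := 1) (by norm_num)).clm_apply contDiff_const

lemma contDiff_conn {g : (Fin n → ℝ) → Matrix (Fin r) (Fin r) ℂ} (hg : IsMetric g) (j : Fin n)
    (a b : Fin r) : ContDiff ℝ 1 fun x => ((g x)⁻¹ * mpd j g x) a b := by
  simp only [Matrix.mul_apply]
  exact ContDiff.sum fun c _ =>
    ((contDiff_inv_entry hg a c).of_le (by norm_num)).mul (contDiff_mpd hg j c b)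

lemma conn_det {g : (Fin n → ℝ) → Matrix (Fin r) (Fin r) ℂ} (hg : IsMetric g) (j : Fin n)
    (x : Fin n → ℝ) :
    ((g x).det • g x)⁻¹ * mpd j (fun y => (g y).det • g y) x =
      (g x)⁻¹ * mpd j g x + ((g x)⁻¹ * mpd j g x).trace • 1 := by
  have hd : ∀ a b, DifferentiableAt ℝ (fun y => g y a b) x := fun a b =>
    (hg.2 a b).differentiable (by norm_num) x
  obtain ⟨hdd, hdet⟩ := pdC_det g x hd j
  have hne : (g x).det ≠ 0 := (hg.1 x).det_pos.ne'
  have h1 : mpd j (fun y => (g y).det • g y) x =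
      (g x).det • mpd j g x + pdC j (fun y => (g y).det) x • g x := by
    ext a b
    simp only [mpd, pdC, Matrix.of_apply, Matrix.add_apply, Matrix.smul_apply, smul_eq_mul]
    rw [fderiv_fun_mul hdd (hd a b)]
    simp [mul_comm]
  have h2 : ((g x).det • g x)⁻¹ = ((g x).det)⁻¹ • (g x)⁻¹ := by
    apply Matrix.inv_eq_left_inv
    rw [Matrix.smul_mul, Matrix.mul_smul, Matrix.nonsing_inv_mul _ (isUnit_iff_ne_zero.mpr hne),
      smul_smul, inv_mul_cancel₀ hne, one_smul]
  have h3 : (g x).adjugate = (g x).det • (g x)⁻¹ := by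
    rw [Matrix.inv_def, smul_smul, Ring.inverse_eq_inv', mul_inv_cancel₀ hne, one_smul]
  rw [h1, h2, hdet, h3]
  simp only [Matrix.mul_add, Matrix.smul_mul, Matrix.mul_smul, smul_smul, Matrix.trace_smul,
    Matrix.nonsing_inv_mul _ (isUnit_iff_ne_zero.mpr hne), smul_eq_mul]
  rw [mul_inv_cancel₀ hne, one_smul]
  congr 2
  field_simp

lemma Theta_det {g : (Fin n → ℝ) → Matrix (Fin r) (Fin r) ℂ} (hg : IsMetric g) (j k : Fin n)
    (x : Fin n → ℝ) :
    Theta (fun y => (g y).det • g y) j k x = Theta g j k x + (Theta g j k x).trace • 1 := by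
  have hd : ∀ a b, DifferentiableAt ℝ (fun y => ((g y)⁻¹ * mpd j g y) a b) x := fun a b =>
    (contDiff_conn hg j a b).differentiable (by norm_num) x
  unfold Theta
  simp only [conn_det hg j]
  ext a b
  simp only [mpd, pdC, Matrix.of_apply, Matrix.add_apply, Matrix.smul_apply, smul_eq_mul,
    Matrix.trace, Matrix.diag] at hd ⊢
  rw [fderiv_fun_add (hd a b) ((DifferentiableAt.fun_sum fun i _ => hd i i).mul_const _),
    fderiv_mul_const (DifferentiableAt.fun_sum fun i _ => hd i i),
    fderiv_fun_sum fun i _ => hd i i]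
  simp [mul_comm]

end Ana

theorem statement14 {n r : ℕ} (g : (Fin n → ℝ) → Matrix (Fin r) (Fin r) ℂ)
    (hg : IsMetric g) (hconc : GriffithsLogConcave g) :
    NakanoLogConcave fun x => (g x).det • g x := by
  intro x u
  have key := demailly_skoda (g x) (hg.1 x) (fun j k => Theta g j k x) (hconc x) u
  have h : ∀ a b, ip ((g x).det • g x) a b = (g x).det * ip (g x) a b := by
    intro a b
    simp [ip, Matrix.smul_mulVec]
  simp only [Theta_det hg, h, ← Finset.mul_sum]
  exact mul_nonpos_of_nonneg_of_nonpos (hg.1 x).det_pos.le key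
end

section
/- (Vector-valued Paley–Wiener Parseval identity) Let g : ℝⁿ → ℂ^{r×r} be a continuous metric and \tilde{g}(ξ) := (2π)ⁿ ∫_{ℝⁿ} e^{2ξ·y} g(y) dV(y). If f ∈ L²(\tilde{g}), i.e. ∫ f(ξ)* \tilde{g}(ξ) f(ξ) dV(ξ) < ∞, and F(z) := ∫_{ℝⁿ} f(ξ) e^{-iξ·z} dV(ξ) for z = x + iy ∈ ℂⁿ, then F is holomorphic on ℂⁿ and ∫_{ℂⁿ} F(x+iy)* g(y) F(x+iy) dV(x,y) = ∫_{ℝⁿ} f(ξ)* \tilde{g}(ξ) f(ξ) dV(ξ). -/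
open scoped ComplexOrder
open Matrix MeasureTheory

/-- The transformed metric `g̃(ξ) = (2π)ⁿ ∫ e^{2ξ·y} g(y) dV(y)` (entrywise). -/
noncomputable def tgauss {n r : ℕ} (g : (Fin n → ℝ) → Matrix (Fin r) (Fin r) ℂ)
    (ξ : Fin n → ℝ) : Matrix (Fin r) (Fin r) ℂ :=
  Matrix.of fun a b =>
    ((2 * Real.pi) ^ n : ℝ) * ∫ y : Fin n → ℝ, (Real.exp (2 * (ξ ⬝ᵥ y)) : ℂ) * g y a b

/-- The Fourier-Laplace transform `F(z) = ∫ f(ξ) e^{-iξ·z} dV(ξ)` (entrywise). -/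
noncomputable def FLtrans {n r : ℕ} (f : (Fin n → ℝ) → Fin r → ℂ)
    (z : Fin n → ℂ) : Fin r → ℂ := fun j =>
  ∫ ξ : Fin n → ℝ, f ξ j * Complex.exp (-Complex.I * ∑ i, (ξ i : ℂ) * z i)

open scoped FourierTransform SchwartzMap ContDiff in
theorem plancherel_L1L2 {E : Type*} [NormedAddCommGroup E] [MeasurableSpace E] [BorelSpace E]
    [InnerProductSpace ℝ E] [FiniteDimensional ℝ E] (h : E → ℂ) (h1 : Integrable h)
    (h2 : MemLp h 2) : ∫⁻ x, ‖𝓕 h x‖ₑ ^ 2 = ∫⁻ x, ‖h x‖ₑ ^ 2 := by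
  let H : Lp (α := E) ℂ 2 := h2.toLp h
  let G : Lp (α := E) ℂ 2 := 𝓕 H
  have key : ∀ᵐ x, (G : E → ℂ) x = 𝓕 h x := by
    apply ae_eq_of_integral_contDiff_smul_eq
    · exact (Lp.memLp G).locallyIntegrable (by norm_num)
    · have : Continuous (𝓕 h) := VectorFourier.fourierIntegral_continuous
        Real.continuous_fourierChar (by exact continuous_inner) h1
      exact this.locallyIntegrable
    · intro g g_smooth g_cpt
      have hg₁ : HasCompactSupport (Complex.ofRealCLM ∘ g) := g_cpt.comp_left rfl
      have hg₂ : ContDiff ℝ ∞ (Complex.ofRealCLM ∘ g) := by fun_prop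
      let φ : 𝓢(E, ℂ) := hg₁.toSchwartzMap hg₂
      have e1 : (G : 𝓢'(E, ℂ)) φ = (H : 𝓢'(E, ℂ)) (𝓕 φ) := by
        rw [← TemperedDistribution.fourier_apply, Lp.fourier_toTemperedDistribution_eq]
      rw [Lp.toTemperedDistribution_apply, Lp.toTemperedDistribution_apply] at e1
      have e2 : ∫ x, g x • (G : E → ℂ) x = ∫ x, φ x • (G : E → ℂ) x := by
        simp [φ]
      have e3 : ∫ x, (𝓕 φ) x • (H : E → ℂ) x = ∫ x, (𝓕 φ) x • h x := by
        apply integral_congr_ae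
        filter_upwards [h2.coeFn_toLp] with x hx
        simp only [H]; rw [hx]
      have e4 : ∫ x, (𝓕 φ) x • h x = ∫ x, φ x • 𝓕 h x := by
        have := VectorFourier.integral_fourierIntegral_smul_eq_flip (L := innerₗ E)
          Real.continuous_fourierChar (by exact continuous_inner) (φ.integrable (μ := volume)) h1
        rw [flip_innerₗ] at this
        rw [SchwartzMap.fourier_coe]
        exact this
      rw [e2, e1, e3, e4]
      simp [φ]
  have hn : ‖G‖ = ‖H‖ := Lp.norm_fourier_eq H
  have e1 : ∫⁻ x, ‖𝓕 h x‖ₑ ^ 2 = eLpNorm G 2 volume ^ 2 := by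
    rw [eLpNorm_eq_lintegral_rpow_enorm_toReal (by norm_num) (by norm_num)]
    rw [← ENNReal.rpow_natCast, ← ENNReal.rpow_mul]
    simp only [ENNReal.toReal_ofNat]
    norm_num
    apply lintegral_congr_ae
    filter_upwards [key] with x hx
    rw [hx]
  have e2 : ∫⁻ x, ‖h x‖ₑ ^ 2 = eLpNorm H 2 volume ^ 2 := by
    rw [eLpNorm_eq_lintegral_rpow_enorm_toReal (by norm_num) (by norm_num)]
    rw [← ENNReal.rpow_natCast, ← ENNReal.rpow_mul]
    simp only [ENNReal.toReal_ofNat]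
    norm_num
    apply lintegral_congr_ae
    filter_upwards [h2.coeFn_toLp] with x hx
    simp only [H]; rw [hx]
  rw [e1, e2]
  rw [Lp.norm_def, Lp.norm_def] at hn
  rw [(ENNReal.toReal_eq_toReal_iff' (Lp.eLpNorm_ne_top G) (Lp.eLpNorm_ne_top H)).1 hn]

theorem plancherel_pi {n : ℕ} (h : (Fin n → ℝ) → ℂ) (h1 : Integrable h) (h2 : MemLp h 2) :
    ∫⁻ x : Fin n → ℝ, ‖∫ ξ : Fin n → ℝ, h ξ * Complex.exp (-Complex.I * ∑ i, (ξ i : ℂ) * (x i : ℂ))‖ₑ ^ 2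
      = ENNReal.ofReal ((2 * Real.pi) ^ n) * ∫⁻ ξ, ‖h ξ‖ₑ ^ 2 := by
  have mp := PiLp.volume_preserving_ofLp (Fin n)
  have mp' := PiLp.volume_preserving_toLp (Fin n)
  have me : MeasurableEmbedding (@WithLp.toLp 2 (Fin n → ℝ)) :=
    (MeasurableEquiv.toLp 2 (Fin n → ℝ)).measurableEmbedding
  have me' : MeasurableEmbedding (@WithLp.ofLp 2 (Fin n → ℝ)) :=
    (MeasurableEquiv.toLp 2 (Fin n → ℝ)).symm.measurableEmbedding
  have P := plancherel_L1L2 (fun v : EuclideanSpace ℝ (Fin n) => h v.ofLp)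
    (mp.integrable_comp_of_integrable h1) (h2.comp_measurePreserving mp)
  have e2 := mp.lintegral_comp_emb me' (fun ξ => ‖h ξ‖ₑ ^ 2)
  rw [e2] at P
  rw [← P]
  rw [← mp'.lintegral_comp_emb me]
  have pos : (2 * Real.pi) ≠ 0 := by positivity
  have sc := Measure.map_addHaar_smul (volume : Measure (Fin n → ℝ)) pos
  set T : (Fin n → ℝ) → ENNReal := fun x => ‖∫ ξ : Fin n → ℝ, h ξ * Complex.exp (-Complex.I * ∑ i, (ξ i : ℂ) * (x i : ℂ))‖ₑ ^ 2 with hT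
  have me2 : MeasurableEmbedding (fun x : Fin n → ℝ => (2 * Real.pi) • x) :=
    (Homeomorph.smulOfNeZero (2 * Real.pi) pos).measurableEmbedding
  have e3 : ∫⁻ x, T ((2 * Real.pi) • x) = ∫⁻ x, T x ∂(Measure.map ((2 * Real.pi) • ·) (volume : Measure (Fin n → ℝ))) :=
    (me2.lintegral_map T).symm
  rw [sc, lintegral_smul_measure] at e3
  have e4 : ∀ x : Fin n → ℝ, T ((2 * Real.pi) • x) = ‖FourierTransform.fourier (fun v : EuclideanSpace ℝ (Fin n) => h v.ofLp) (WithLp.toLp 2 x)‖ₑ ^ 2 := by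
    intro x
    simp only [hT]
    congr 2
    rw [Real.fourier_eq']
    rw [← mp'.integral_comp me]
    congr 1
    ext ξ
    simp [PiLp.inner_apply]
    rw [mul_comm]
    congr 2
    simp only [Finset.mul_sum, Finset.sum_mul, ← Finset.sum_neg_distrib]
    apply Finset.sum_congr rfl
    intros
    ring
  simp_rw [← e4]
  rw [e3, smul_eq_mul, ← mul_assoc, ← ENNReal.ofReal_mul (by positivity), abs_of_pos (by positivity)]
  simp [pos]

theorem posDef_factor {r : ℕ} (M : Matrix (Fin r) (Fin r) ℂ) (hM : M.PosDef) :
    ∃ B : Matrix (Fin r) (Fin r) ℂ, M = Bᴴ * B ∧ IsUnit B.det := by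
  open scoped MatrixOrder in
  obtain ⟨B, hB⟩ := CStarAlgebra.nonneg_iff_eq_star_mul_self.mp hM.posSemidef.nonneg
  refine ⟨B, hB, ?_⟩
  have h := hM.isUnit
  rw [Matrix.isUnit_iff_isUnit_det, hB, Matrix.det_mul] at h
  exact isUnit_of_mul_isUnit_right h

/-- the quadratic form as an extended nonnegative real -/
noncomputable def qf {r : ℕ} (M : Matrix (Fin r) (Fin r) ℂ) (v : Fin r → ℂ) : ENNReal :=
  ENNReal.ofReal (star v ⬝ᵥ M.mulVec v).re

theorem qf_factor {r : ℕ} (B : Matrix (Fin r) (Fin r) ℂ) (v : Fin r → ℂ) :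
    qf (Bᴴ * B) v = ∑ k, ‖B.mulVec v k‖ₑ ^ 2 := by
  unfold qf
  rw [← Matrix.mulVec_mulVec, Matrix.dotProduct_mulVec, ← Matrix.star_mulVec]
  simp only [dotProduct, Complex.re_sum]
  rw [ENNReal.ofReal_sum_of_nonneg]
  · apply Finset.sum_congr rfl
    intro k _
    rw [← ofReal_norm, ← ENNReal.ofReal_pow (norm_nonneg _)]
    congr 1
    rw [← Complex.normSq_eq_norm_sq, Complex.normSq_apply]
    simp
  · intro k _
    simp
    nlinarith [mul_self_nonneg (B.mulVec v k).re, mul_self_nonneg (B.mulVec v k).im]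

theorem qf_smul {r : ℕ} (M : Matrix (Fin r) (Fin r) ℂ) (v : Fin r → ℂ) (c : ℝ) :
    qf M (fun j => v j * c) = ENNReal.ofReal (c ^ 2) * qf M v := by
  unfold qf
  rw [← ENNReal.ofReal_mul (by positivity)]
  congr 1
  have : (fun j => v j * (c : ℂ)) = (c : ℂ) • v := by ext j; simp [mul_comm]
  rw [this, star_smul, Matrix.mulVec_smul, smul_dotProduct, dotProduct_smul]
  simp [pow_two, mul_assoc]

theorem memLp_two_iff_lint {α : Type*} [MeasurableSpace α] {μ : Measure α} {u : α → ℂ}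
    (hu : AEStronglyMeasurable u μ) : MemLp u 2 μ ↔ ∫⁻ x, ‖u x‖ₑ ^ 2 ∂μ < ⊤ := by
  have e := eLpNorm_lt_top_iff_lintegral_rpow_enorm_lt_top (p := 2) (μ := μ) (f := u) (by norm_num) (by norm_num)
  simp only [ENNReal.toReal_ofNat] at e
  simp only [MemLp, hu, true_and, e]
  norm_num

theorem memLp_of_qf {n r : ℕ} (M : Matrix (Fin r) (Fin r) ℂ) (hM : M.PosDef)
    (h : (Fin n → ℝ) → Fin r → ℂ) (hm : Measurable h) (hq : ∫⁻ ξ, qf M (h ξ) < ⊤) (j : Fin r) :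
    MemLp (fun ξ => h ξ j) 2 := by
  obtain ⟨B, rfl, hB⟩ := posDef_factor M hM
  have m1 : ∀ k, Measurable fun ξ => B.mulVec (h ξ) k := by
    intro k; simp only [mulVec, dotProduct]; fun_prop
  have h1 : ∀ k, MemLp (fun ξ => B.mulVec (h ξ) k) 2 := by
    intro k
    rw [memLp_two_iff_lint (m1 k).aestronglyMeasurable]
    refine lt_of_le_of_lt (lintegral_mono fun ξ => ?_) hq
    rw [qf_factor]
    exact Finset.single_le_sum (f := fun k => ‖B.mulVec (h ξ) k‖ₑ ^ 2) (fun _ _ => zero_le) (Finset.mem_univ k)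
  have h2 : (fun ξ => h ξ j) = fun ξ => ∑ k, B⁻¹ j k * B.mulVec (h ξ) k := by
    ext ξ
    have : h ξ = B⁻¹.mulVec (B.mulVec (h ξ)) := by
      rw [Matrix.mulVec_mulVec, Matrix.nonsing_inv_mul _ hB, Matrix.one_mulVec]
    conv_lhs => rw [this]
    rfl
  rw [h2]
  exact memLp_finsetSum _ fun k _ => (h1 k).const_mul _

theorem parseval_qf {n r : ℕ} (M : Matrix (Fin r) (Fin r) ℂ) (hM : M.PosDef)
    (h : (Fin n → ℝ) → Fin r → ℂ) (hm : Measurable h)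
    (h1 : ∀ j, Integrable fun ξ => h ξ j) (h2 : ∀ j, MemLp (fun ξ => h ξ j) 2) :
    ∫⁻ x : Fin n → ℝ, qf M (fun j => ∫ ξ : Fin n → ℝ, h ξ j *
        Complex.exp (-Complex.I * ∑ i, (ξ i : ℂ) * (x i : ℂ)))
      = ENNReal.ofReal ((2 * Real.pi) ^ n) * ∫⁻ ξ, qf M (h ξ) := by
  obtain ⟨B, rfl, hB⟩ := posDef_factor M hM
  simp_rw [qf_factor]
  have m1 : ∀ k, Measurable fun ξ => B.mulVec (h ξ) k := by
    intro k; simp only [mulVec, dotProduct]; fun_prop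
  have i1 : ∀ k, Integrable fun ξ => B.mulVec (h ξ) k := by
    intro k; simp only [mulVec, dotProduct]
    exact integrable_finsetSum _ fun j _ => (h1 j).const_mul _
  have i2 : ∀ k, MemLp (fun ξ => B.mulVec (h ξ) k) 2 := by
    intro k; simp only [mulVec, dotProduct]
    exact memLp_finsetSum _ fun j _ => (h2 j).const_mul _
  have i3 : ∀ (u : (Fin n → ℝ) → ℂ) (hu : Integrable u) (x : Fin n → ℝ), Integrable fun ξ : Fin n → ℝ =>
      u ξ * Complex.exp (-Complex.I * ∑ i, (ξ i : ℂ) * (x i : ℂ)) := by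
    intro u hu x
    refine hu.mul_bdd (c := 1) (Measurable.aestronglyMeasurable (by fun_prop)) (Filter.Eventually.of_forall fun ξ => ?_)
    rw [Complex.norm_exp]
    simp
  have e : ∀ (x : Fin n → ℝ) k, B.mulVec (fun j => ∫ ξ : Fin n → ℝ, h ξ j *
        Complex.exp (-Complex.I * ∑ i, (ξ i : ℂ) * (x i : ℂ))) k =
      ∫ ξ : Fin n → ℝ, B.mulVec (h ξ) k *
        Complex.exp (-Complex.I * ∑ i, (ξ i : ℂ) * (x i : ℂ)) := by
    intro x k
    simp only [mulVec, dotProduct, Finset.sum_mul, mul_assoc]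
    rw [integral_finsetSum _ fun j _ => (i3 _ (h1 j) x).const_mul _]
    simp_rw [integral_const_mul]
  simp_rw [e]
  rw [lintegral_finsetSum, lintegral_finsetSum, Finset.mul_sum]
  · exact Finset.sum_congr rfl fun k _ => plancherel_pi _ (i1 k) (i2 k)
  · intro k _; exact (m1 k).enorm.pow_const 2
  · intro k _
    refine Measurable.pow_const (Measurable.enorm ?_) 2
    apply StronglyMeasurable.measurable
    apply MeasureTheory.StronglyMeasurable.integral_prod_right' (f := fun p : (Fin n → ℝ) × (Fin n → ℝ) => B.mulVec (h p.2) k *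
        Complex.exp (-Complex.I * ∑ i, (p.2 i : ℂ) * (p.1 i : ℂ)))
    apply Measurable.stronglyMeasurable
    have := m1 k
    fun_prop

theorem integrable_exp_neg_sum {n : ℕ} :
    Integrable fun ξ : Fin n → ℝ => Real.exp (-2 * ∑ i, |ξ i|) := by
  have h1 : Integrable fun t : ℝ => Real.exp (-2 * |t|) := by
    refine integrable_inv_one_add_sq.mono' (by fun_prop) (Filter.Eventually.of_forall fun t => ?_)
    rw [Real.norm_eq_abs, abs_of_pos (Real.exp_pos _), neg_mul, Real.exp_neg]
    apply inv_anti₀ (by positivity)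
    have := Real.quadratic_le_exp_of_nonneg (x := 2 * |t|) (by positivity)
    nlinarith [abs_nonneg t, sq_abs t]
  have := Integrable.fintype_prod (ι := Fin n) (f := fun _ t => Real.exp (-2 * |t|)) (fun _ => h1)
  simp_rw [Finset.mul_sum, Real.exp_sum]
  exact this

theorem memLp_all {n : ℕ} (u : (Fin n → ℝ) → ℂ) (hu : Measurable u)
    (h : ∀ᵐ y : Fin n → ℝ, MemLp (fun ξ => u ξ * (Real.exp (ξ ⬝ᵥ y) : ℂ)) 2) (y : Fin n → ℝ) :
    MemLp (fun ξ => u ξ * (Real.exp (ξ ⬝ᵥ y) : ℂ)) 2 := by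
  have h' := (quasiMeasurePreserving_sub_left (volume : Measure (Fin n → ℝ)) (y + y)).ae h
  obtain ⟨a, ha, hb⟩ := (h.and h').exists
  refine (ha.norm.add hb.norm).of_le
    (Measurable.aestronglyMeasurable (by simp only [dotProduct]; fun_prop)) 
    (Filter.Eventually.of_forall fun ξ => ?_)
  simp only [Pi.add_apply, norm_mul, Complex.norm_real, Real.norm_eq_abs, Real.abs_exp]
  rw [← mul_add, abs_of_nonneg (by positivity)]
  gcongr
  have e : ξ ⬝ᵥ (y + y - a) = 2 * ξ ⬝ᵥ y - ξ ⬝ᵥ a := by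
    rw [dotProduct_sub, dotProduct_add]; ring
  rw [e]
  rcases le_total (ξ ⬝ᵥ y) (ξ ⬝ᵥ a) with hh | hh
  · have := Real.exp_le_exp.2 hh
    have := Real.exp_pos (2 * ξ ⬝ᵥ y - ξ ⬝ᵥ a)
    linarith
  · have := Real.exp_le_exp.2 (show ξ ⬝ᵥ y ≤ 2 * ξ ⬝ᵥ y - ξ ⬝ᵥ a by linarith)
    have := Real.exp_pos (ξ ⬝ᵥ a)
    linarith

theorem memLp_abs {n : ℕ} (u : (Fin n → ℝ) → ℂ) (hu : Measurable u)
    (h : ∀ y : Fin n → ℝ, MemLp (fun ξ => u ξ * (Real.exp (ξ ⬝ᵥ y) : ℂ)) 2) (y : Fin n → ℝ) (c : ℝ)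
    (hc : 0 ≤ c) :
    MemLp (fun ξ => u ξ * (Real.exp (ξ ⬝ᵥ y + c * ∑ i, |ξ i|) : ℂ)) 2 := by
  let Y : (Fin n → Bool) → Fin n → ℝ := fun s i => y i + c * (if s i then 1 else -1)
  have hs : MemLp (fun ξ => ∑ s, ‖u ξ * (Real.exp (ξ ⬝ᵥ Y s) : ℂ)‖) 2 :=
    memLp_finsetSum _ fun s _ => (h (Y s)).norm
  refine hs.of_le
    (Measurable.aestronglyMeasurable (by simp only [dotProduct]; fun_prop)) 
    (Filter.Eventually.of_forall fun ξ => ?_)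
  rw [Real.norm_eq_abs, abs_of_nonneg (Finset.sum_nonneg fun _ _ => norm_nonneg _)]
  refine le_trans (le_of_eq ?_) (Finset.single_le_sum (f := fun s => ‖u ξ * (Real.exp (ξ ⬝ᵥ Y s) : ℂ)‖) (fun _ _ => norm_nonneg _)
    (Finset.mem_univ (fun i => decide (0 ≤ ξ i))))
  congr 4
  simp only [Y, dotProduct, Finset.mul_sum, ← Finset.sum_add_distrib]
  apply Finset.sum_congr rfl
  intro i _
  by_cases hi : 0 ≤ ξ i
  · simp [hi, abs_of_nonneg hi]; ring
  · simp [hi, abs_of_neg (not_le.1 hi)]; ring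

theorem integrable_abs {n : ℕ} (u : (Fin n → ℝ) → ℂ) (hu : Measurable u)
    (h : ∀ y : Fin n → ℝ, MemLp (fun ξ => u ξ * (Real.exp (ξ ⬝ᵥ y) : ℂ)) 2) (y : Fin n → ℝ) (c : ℝ)
    (hc : 0 ≤ c) :
    Integrable (fun ξ => u ξ * (Real.exp (ξ ⬝ᵥ y + c * ∑ i, |ξ i|) : ℂ)) := by
  have h1 := memLp_abs u hu h y (c + 1) (by linarith)
  have h2 : MemLp (fun ξ : Fin n → ℝ => (Real.exp (- ∑ i, |ξ i|) : ℂ)) 2 := by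
    have : MemLp (fun ξ : Fin n → ℝ => (Real.exp (- ∑ i, |ξ i|))) 2 := by
      rw [memLp_two_iff_integrable_sq (Measurable.aestronglyMeasurable (by fun_prop))]
      convert integrable_exp_neg_sum (n := n) using 2 with ξ
      rw [pow_two, ← Real.exp_add]; congr 1; ring
    exact this.ofReal
  have h3 := h1.integrable_mul h2
  refine h3.congr (Filter.Eventually.of_forall fun ξ => ?_)
  simp only [Pi.mul_apply, mul_assoc, ← Complex.ofReal_mul, ← Real.exp_add]
  congr 3
  ring

theorem FL_diff {n r : ℕ} (f : (Fin n → ℝ) → Fin r → ℂ) (hf : Measurable f)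
    (h : ∀ j, ∀ y : Fin n → ℝ, MemLp (fun ξ => f ξ j * (Real.exp (ξ ⬝ᵥ y) : ℂ)) 2) :
    Differentiable ℂ (FLtrans f) := by
  rw [differentiable_pi]
  intro j z0
  have hfj : Measurable fun ξ => f ξ j := by fun_prop
  let L : (Fin n → ℝ) → ((Fin n → ℂ) →L[ℂ] ℂ) := fun ξ =>
    ∑ i, (ξ i : ℂ) • ContinuousLinearMap.proj (R := ℂ) (φ := fun _ : Fin n => ℂ) i
  have hLm : Measurable L := by
    apply Continuous.measurable
    simp only [L]
    fun_prop
  have hL : ∀ ξ z, L ξ z = ∑ i, (ξ i : ℂ) * z i := by intro ξ z; simp [L]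
  have hLn : ∀ ξ, ‖L ξ‖ ≤ ∑ i, |ξ i| := by
    intro ξ
    refine ContinuousLinearMap.opNorm_le_bound _ (Finset.sum_nonneg fun _ _ => abs_nonneg _) fun z => ?_
    rw [hL, Finset.sum_mul]
    refine (norm_sum_le _ _).trans (Finset.sum_le_sum fun i _ => ?_)
    rw [norm_mul, Complex.norm_real, Real.norm_eq_abs]
    gcongr
    exact norm_le_pi_norm z i
  have key := hasFDerivAt_integral_of_dominated_of_fderiv_le (𝕜 := ℂ) (μ := volume)
    (s := Metric.ball z0 1) (x₀ := z0)
    (F := fun z ξ => f ξ j * Complex.exp (-Complex.I * ∑ i, (ξ i : ℂ) * z i))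
    (F' := fun z ξ => (f ξ j * Complex.exp (-Complex.I * ∑ i, (ξ i : ℂ) * z i) * (-Complex.I)) • L ξ)
    (bound := fun ξ => ‖f ξ j * (Real.exp (ξ ⬝ᵥ (fun i => (z0 i).im) + 2 * ∑ i, |ξ i|) : ℂ)‖)
    (Metric.ball_mem_nhds z0 one_pos)
    (Filter.Eventually.of_forall fun z => Measurable.aestronglyMeasurable (by fun_prop))
    ?_ (Measurable.aestronglyMeasurable (by fun_prop)) ?_ ?_ ?_
  · exact key.differentiableAt
  · refine (integrable_abs _ hfj (h j) (fun i => (z0 i).im) 0 le_rfl).mono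
      (Measurable.aestronglyMeasurable (by fun_prop)) (Filter.Eventually.of_forall fun ξ => ?_)
    rw [norm_mul, norm_mul, Complex.norm_exp, Complex.norm_real, Real.norm_eq_abs, Real.abs_exp]
    simp [dotProduct]
  · refine Filter.Eventually.of_forall fun ξ z hz => ?_
    rw [norm_smul, norm_mul, norm_mul, norm_mul, Complex.norm_exp, Complex.norm_real, Real.norm_eq_abs, Real.abs_exp]
    simp only [norm_neg, Complex.norm_I, mul_one, mul_assoc]
    gcongr
    have h1 : (-(Complex.I * ∑ i, (ξ i : ℂ) * z i)).re ≤ ξ ⬝ᵥ (fun i => (z0 i).im) + ∑ i, |ξ i| := by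
      simp [dotProduct, ← Finset.sum_add_distrib]
      refine Finset.sum_le_sum fun i _ => ?_
      have h2 : |(z i).im - (z0 i).im| ≤ 1 := by
        rw [← Complex.sub_im]
        refine (Complex.abs_im_le_norm _).trans ((norm_le_pi_norm (z - z0) i).trans ?_)
        rw [Metric.mem_ball, dist_eq_norm] at hz
        exact hz.le
      have h3 : ξ i * ((z i).im - (z0 i).im) ≤ |ξ i| := by
        refine (le_abs_self _).trans ?_
        rw [abs_mul]
        nlinarith [abs_nonneg (ξ i)]
      linarith
    have h4 : ‖L ξ‖ ≤ Real.exp (∑ i, |ξ i|) :=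
      (hLn ξ).trans (by linarith [Real.add_one_le_exp (∑ i, |ξ i|)])
    calc _ ≤ Real.exp (ξ ⬝ᵥ (fun i => (z0 i).im) + ∑ i, |ξ i|) * Real.exp (∑ i, |ξ i|) := by
          gcongr
          simpa using h1
      _ = _ := by rw [← Real.exp_add]; congr 1; ring
  · exact (integrable_abs _ hfj (h j) _ 2 (by norm_num)).norm
  · refine Filter.Eventually.of_forall fun ξ z hz => ?_
    simp_rw [← hL]
    have := (((L ξ).hasFDerivAt (x := z)).const_mul (-Complex.I)).cexp.const_mul (f ξ j)
    refine this.congr_fderiv ?_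
    simp only [smul_smul, mul_assoc]

theorem tgauss_qf {n r : ℕ} (g : (Fin n → ℝ) → Matrix (Fin r) (Fin r) ℂ)
    (hgpos : ∀ y, (g y).PosDef)
    (hgint : ∀ (ξ : Fin n → ℝ) (a b : Fin r),
      Integrable fun y : Fin n → ℝ => (Real.exp (2 * (ξ ⬝ᵥ y)) : ℂ) * g y a b)
    (v : Fin r → ℂ) (ξ : Fin n → ℝ) :
    0 ≤ star v ⬝ᵥ (tgauss g ξ).mulVec v ∧
    qf (tgauss g ξ) v = ENNReal.ofReal ((2 * Real.pi) ^ n) *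
      ∫⁻ y, qf (g y) (fun j => v j * (Real.exp (ξ ⬝ᵥ y) : ℂ)) := by
  have hexp : ∀ y : Fin n → ℝ, (Real.exp (2 * (ξ ⬝ᵥ y)) : ℂ) * (star v ⬝ᵥ (g y).mulVec v) =
      ∑ a, ∑ b, star (v a) * v b * ((Real.exp (2 * (ξ ⬝ᵥ y)) : ℂ) * g y a b) := by
    intro y
    simp only [dotProduct, mulVec, Finset.mul_sum, Pi.star_apply]
    refine Finset.sum_congr rfl fun a _ => Finset.sum_congr rfl fun b _ => ?_
    ring
  have hIntg : Integrable fun y : Fin n → ℝ =>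
      (Real.exp (2 * (ξ ⬝ᵥ y)) : ℂ) * (star v ⬝ᵥ (g y).mulVec v) := by
    simp_rw [hexp]
    exact integrable_finsetSum _ fun a _ => integrable_finsetSum _ fun b _ =>
      (hgint ξ a b).const_mul _
  have heq : star v ⬝ᵥ (tgauss g ξ).mulVec v = (((2 * Real.pi) ^ n : ℝ) : ℂ) *
      ∫ y : Fin n → ℝ, (Real.exp (2 * (ξ ⬝ᵥ y)) : ℂ) * (star v ⬝ᵥ (g y).mulVec v) := by
    simp_rw [hexp]
    rw [integral_finsetSum _ fun a _ => integrable_finsetSum _ fun b _ =>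
      (hgint ξ a b).const_mul _]
    simp_rw [integral_finsetSum _ fun b _ => (hgint ξ _ b).const_mul _, integral_const_mul]
    simp only [dotProduct, mulVec, Finset.mul_sum, Pi.star_apply, tgauss, Matrix.of_apply]
    refine Finset.sum_congr rfl fun a _ => Finset.sum_congr rfl fun b _ => ?_
    ring
  have hnn : ∀ y, 0 ≤ (star v ⬝ᵥ (g y).mulVec v).re := fun y =>
    (Complex.nonneg_iff.1 ((hgpos y).posSemidef.dotProduct_mulVec_nonneg v)).1
  have hre : ∀ y, (star v ⬝ᵥ (g y).mulVec v) = ((star v ⬝ᵥ (g y).mulVec v).re : ℂ) := fun y => by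
    have := (Complex.nonneg_iff.1 ((hgpos y).posSemidef.dotProduct_mulVec_nonneg v)).2
    exact Complex.ext (by simp) (by simp [← this])
  have hreal : ∀ y : Fin n → ℝ, (Real.exp (2 * (ξ ⬝ᵥ y)) : ℂ) * (star v ⬝ᵥ (g y).mulVec v) =
      ((Real.exp (2 * (ξ ⬝ᵥ y)) * (star v ⬝ᵥ (g y).mulVec v).re : ℝ) : ℂ) := by
    intro y
    rw [Complex.ofReal_mul, ← hre y]
  simp_rw [hreal] at heq hIntg
  have hIntg' : Integrable fun y : Fin n → ℝ =>
      Real.exp (2 * (ξ ⬝ᵥ y)) * (star v ⬝ᵥ (g y).mulVec v).re := by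
    exact hIntg.re
  rw [integral_complex_ofReal, ← Complex.ofReal_mul] at heq
  have hI : 0 ≤ ∫ y : Fin n → ℝ, Real.exp (2 * (ξ ⬝ᵥ y)) * (star v ⬝ᵥ (g y).mulVec v).re :=
    integral_nonneg fun y => mul_nonneg (Real.exp_pos _).le (hnn y)
  refine ⟨?_, ?_⟩
  · rw [heq, Complex.zero_le_real]
    positivity
  · unfold qf at *
    rw [heq, Complex.ofReal_re, ENNReal.ofReal_mul (by positivity),
      ofReal_integral_eq_lintegral_ofReal hIntg'
        (Filter.Eventually.of_forall fun y => mul_nonneg (Real.exp_pos _).le (hnn y))]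
    congr 1
    refine lintegral_congr fun y => ?_
    have := qf_smul (g y) v (Real.exp (ξ ⬝ᵥ y))
    unfold qf at this
    rw [this, ENNReal.ofReal_mul (Real.exp_pos _).le]
    congr 2
    rw [pow_two, ← Real.exp_add]
    congr 1
    ring

theorem integral_of_qf {α : Type*} [MeasurableSpace α] {μ : Measure α} (u : α → ℂ)
    (h0 : ∀ x, 0 ≤ u x) (hu : AEStronglyMeasurable u μ) :
    (Integrable u μ ↔ ∫⁻ x, ENNReal.ofReal (u x).re ∂μ < ⊤) ∧
    ∫ x, u x ∂μ = (((∫⁻ x, ENNReal.ofReal (u x).re ∂μ).toReal : ℝ) : ℂ) := by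
  have h1 : ∀ x, 0 ≤ (u x).re := fun x => (Complex.nonneg_iff.1 (h0 x)).1
  have h2 : ∀ x, u x = ((u x).re : ℂ) := fun x =>
    Complex.ext (by simp) (by simp [← (Complex.nonneg_iff.1 (h0 x)).2])
  have hm : AEStronglyMeasurable (fun x => (u x).re) μ := Complex.continuous_re.comp_aestronglyMeasurable hu
  constructor
  · unfold Integrable HasFiniteIntegral
    simp only [hu, true_and]
    have : ∀ x, ‖u x‖ₑ = ENNReal.ofReal (u x).re := by
      intro x
      rw [← ofReal_norm]
      conv_lhs => rw [h2 x]
      rw [Complex.norm_real, Real.norm_eq_abs, abs_of_nonneg (h1 x)]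
    simp_rw [this]
  · rw [← integral_eq_lintegral_of_nonneg_ae (Filter.Eventually.of_forall h1) hm,
      ← integral_complex_ofReal]
    exact integral_congr_ae (Filter.Eventually.of_forall h2)

theorem statement18 {n r : ℕ} (g : (Fin n → ℝ) → Matrix (Fin r) (Fin r) ℂ)
    (hgpos : ∀ y, (g y).PosDef) (hgcont : ∀ a b, Continuous fun y => g y a b)
    (hgint : ∀ (ξ : Fin n → ℝ) (a b : Fin r),
      Integrable fun y : Fin n → ℝ => (Real.exp (2 * (ξ ⬝ᵥ y)) : ℂ) * g y a b)
    (f : (Fin n → ℝ) → Fin r → ℂ) (hfmeas : Measurable f)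
    (hfL2 : Integrable fun ξ => star (f ξ) ⬝ᵥ (tgauss g ξ).mulVec (f ξ)) :
    Differentiable ℂ (FLtrans f) ∧
    (Integrable fun p : (Fin n → ℝ) × (Fin n → ℝ) =>
      star (FLtrans f fun i => (p.1 i : ℂ) + (p.2 i : ℂ) * Complex.I) ⬝ᵥ
        (g p.2).mulVec (FLtrans f fun i => (p.1 i : ℂ) + (p.2 i : ℂ) * Complex.I)) ∧
    (∫ p : (Fin n → ℝ) × (Fin n → ℝ),
        star (FLtrans f fun i => (p.1 i : ℂ) + (p.2 i : ℂ) * Complex.I) ⬝ᵥ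
          (g p.2).mulVec (FLtrans f fun i => (p.1 i : ℂ) + (p.2 i : ℂ) * Complex.I))
      = ∫ ξ : Fin n → ℝ, star (f ξ) ⬝ᵥ (tgauss g ξ).mulVec (f ξ) := by
  have hgm : ∀ a b, Measurable fun y => g y a b := fun a b => (hgcont a b).measurable
  set W : (Fin n → ℝ) → (Fin n → ℝ) → ENNReal := fun ξ y =>
    qf (g y) (fun j => f ξ j * (Real.exp (ξ ⬝ᵥ y) : ℂ)) with hW
  have hWm : Measurable (Function.uncurry W) := by
    simp only [hW, Function.uncurry_def, qf, dotProduct, mulVec, Pi.star_apply]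
    fun_prop
  set C : ENNReal := ENNReal.ofReal ((2 * Real.pi) ^ n) with hC
  have hC0 : C ≠ 0 := by
    rw [hC, Ne, ENNReal.ofReal_eq_zero, not_le]; positivity
  have hT : ∀ ξ, qf (tgauss g ξ) (f ξ) = C * ∫⁻ y, W ξ y := fun ξ =>
    (tgauss_qf g hgpos hgint (f ξ) ξ).2
  have hR := integral_of_qf (μ := volume) (fun ξ => star (f ξ) ⬝ᵥ (tgauss g ξ).mulVec (f ξ))
    (fun ξ => (tgauss_qf g hgpos hgint (f ξ) ξ).1) hfL2.1
  have hRfin := hR.1.1 hfL2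
  have hWm2 : Measurable fun ξ => ∫⁻ y, W ξ y := hWm.lintegral_prod_right'
  have hReq : ∫⁻ ξ, ENNReal.ofReal (star (f ξ) ⬝ᵥ (tgauss g ξ).mulVec (f ξ)).re =
      C * ∫⁻ y, ∫⁻ ξ, W ξ y := by
    rw [lintegral_lintegral_swap (f := fun y ξ => W ξ y) (hWm.comp measurable_swap).aemeasurable,
      ← lintegral_const_mul _ hWm2]
    exact lintegral_congr fun ξ => hT ξ
  have hfin : ∫⁻ y, ∫⁻ ξ, W ξ y < ⊤ := by
    rw [hReq] at hRfin
    by_contra hcon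
    rw [not_lt, top_le_iff] at hcon
    rw [hcon, ENNReal.mul_top hC0] at hRfin
    exact lt_irrefl _ hRfin
  have hWm' : Measurable fun y => ∫⁻ ξ, W ξ y := hWm.lintegral_prod_left'
  have hae := ae_lt_top hWm' hfin.ne
  have hmeas : ∀ y : Fin n → ℝ, Measurable fun ξ : Fin n → ℝ =>
      (fun j => f ξ j * (Real.exp (ξ ⬝ᵥ y) : ℂ)) := by
    intro y; simp only [dotProduct]; fun_prop
  have hL2 : ∀ j, ∀ y : Fin n → ℝ, MemLp (fun ξ => f ξ j * (Real.exp (ξ ⬝ᵥ y) : ℂ)) 2 := by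
    intro j
    apply memLp_all _ (by fun_prop)
    filter_upwards [hae] with y hy
    exact memLp_of_qf (g y) (hgpos y) _ (hmeas y) hy j
  have hL1 : ∀ j, ∀ y : Fin n → ℝ, Integrable (fun ξ => f ξ j * (Real.exp (ξ ⬝ᵥ y) : ℂ)) := by
    intro j y
    simpa using integrable_abs _ (by fun_prop) (hL2 j) y 0 le_rfl
  have hdiff := FL_diff f hfmeas hL2
  have hFcont : Continuous fun p : (Fin n → ℝ) × (Fin n → ℝ) =>
      FLtrans f fun i => (p.1 i : ℂ) + (p.2 i : ℂ) * Complex.I :=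
    hdiff.continuous.comp (by fun_prop)
  have hcont : Continuous fun p : (Fin n → ℝ) × (Fin n → ℝ) =>
      star (FLtrans f fun i => (p.1 i : ℂ) + (p.2 i : ℂ) * Complex.I) ⬝ᵥ
        (g p.2).mulVec (FLtrans f fun i => (p.1 i : ℂ) + (p.2 i : ℂ) * Complex.I) := by
    have h1 := fun j => (continuous_apply j).comp hFcont
    simp only [Function.comp_def] at h1
    simp only [dotProduct, mulVec, Pi.star_apply]
    refine continuous_finsetSum _ fun a _ => (h1 a).star.mul
      (continuous_finsetSum _ fun b _ => Continuous.mul ?_ (h1 b))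
    exact (hgcont a b).comp continuous_snd
  have hF := integral_of_qf (μ := volume) _
    (fun p : (Fin n → ℝ) × (Fin n → ℝ) => (hgpos p.2).posSemidef.dotProduct_mulVec_nonneg
      (FLtrans f fun i => (p.1 i : ℂ) + (p.2 i : ℂ) * Complex.I)) hcont.aestronglyMeasurable
  have hFL : ∀ x y : Fin n → ℝ, (FLtrans f fun i => (x i : ℂ) + (y i : ℂ) * Complex.I) =
      fun j => ∫ ξ : Fin n → ℝ, (f ξ j * (Real.exp (ξ ⬝ᵥ y) : ℂ)) *
        Complex.exp (-Complex.I * ∑ i, (ξ i : ℂ) * (x i : ℂ)) := by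
    intro x y
    ext j
    unfold FLtrans
    congr 1
    ext ξ
    rw [mul_assoc, Complex.ofReal_exp, ← Complex.exp_add]
    congr 2
    simp only [dotProduct, Complex.ofReal_sum, Complex.ofReal_mul, Finset.mul_sum,
      ← Finset.sum_add_distrib]
    refine Finset.sum_congr rfl fun i _ => ?_
    linear_combination (-(ξ i : ℂ) * (y i : ℂ)) * Complex.I_sq
  have hFeq : ∫⁻ p : (Fin n → ℝ) × (Fin n → ℝ), ENNReal.ofReal
      (star (FLtrans f fun i => (p.1 i : ℂ) + (p.2 i : ℂ) * Complex.I) ⬝ᵥ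
        (g p.2).mulVec (FLtrans f fun i => (p.1 i : ℂ) + (p.2 i : ℂ) * Complex.I)).re =
      C * ∫⁻ y, ∫⁻ ξ, W ξ y := by
    have hmm := ENNReal.measurable_ofReal.comp (Complex.measurable_re.comp hcont.measurable)
    simp only [Function.comp_def] at hmm
    rw [Measure.volume_eq_prod, lintegral_prod_symm _ hmm.aemeasurable,
      ← lintegral_const_mul _ hWm']
    refine lintegral_congr fun y => ?_
    have := parseval_qf (g y) (hgpos y) _ (hmeas y) (fun j => hL1 j y) (fun j => hL2 j y)
    rw [← this]
    refine lintegral_congr fun x => ?_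
    simp only [hFL, qf]
  refine ⟨hdiff, ?_, ?_⟩
  · refine hF.1.2 ?_
    rw [hFeq, ← hReq]
    exact hRfin
  · rw [hF.2, hR.2, hFeq, hReq]
end

section
/- (Matrix-valued Prékopa theorem) Let g : ℝⁿ_y × ℝ^m_t → ℂ^{r×r} be a metric (twice differentiable, Hermitian, strictly positive definite) that is log concave in the sense of Nakano on ℝ^{n+m}, and assume all entrywise integrals \tilde{g}(t) := ∫_{ℝⁿ} g(y,t) dV(y) converge and define a twice differentiable function of t. Then \tilde{g} : ℝ^m → ℂ^{r×r} is a metric that is log concave in the sense of Nakano. -/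
open scoped ComplexOrder
open Matrix MeasureTheory

/-- Fiberwise integral `g̃(t) = ∫_{ℝⁿ} g(y,t) dV(y)` (entrywise). -/
noncomputable def fiberInt {n m r : ℕ}
    (g : ((Fin n ⊕ Fin m) → ℝ) → Matrix (Fin r) (Fin r) ℂ)
    (t : Fin m → ℝ) : Matrix (Fin r) (Fin r) ℂ :=
  Matrix.of fun a b => ∫ y : Fin n → ℝ, g (Sum.elim y t) a b

section AbstractCore

open Set Filter Topology

variable {A : Type*} [NormedRing A] [NormedAlgebra ℝ A] [CompleteSpace A] [StarRing A]
  [ContinuousStar A] [StarModule ℝ A]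

/-- The one dimensional integrated inequality. -/
lemma core_ineq (τ : A →L[ℝ] ℝ) (hτ : ∀ x, τ (star x) = τ x)
    {g g1 g2 k k1 w w1 : ℝ → A} {h : ℝ → ℝ} {a b : ℝ} (hab : a ≤ b)
    (hg : ∀ s, HasDerivAt g (g1 s) s) (hg1 : ∀ s, HasDerivAt g1 (g2 s) s)
    (hk : ∀ s, HasDerivAt k (k1 s) s) (hw : ∀ s, HasDerivAt w (w1 s) s)
    (hkg : ∀ s, k s * g s = 1) (hgk : ∀ s, g s * k s = 1)
    (sg : ∀ s, star (g s) = g s) (sg1 : ∀ s, star (g1 s) = g1 s)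
    (pos : ∀ s X, 0 ≤ τ (star X * g s * X)) (hh : Continuous h) (v : A)
    (hv : (∫ s in a..b, g s) * v = ∫ s in a..b, w s)
    (key : ∀ s X, h s + 2 * τ (star X * w1 s) + τ (star X * g2 s * X) ≤
      τ (star (g1 s * X + w s) * k s * (g1 s * X + w s))) :
    ∫ s in a..b, h s ≤ τ (star v * ∫ s in a..b, w s) := by
  have cg : Continuous g := continuous_iff_continuousAt.2 fun s => (hg s).continuousAt
  have cw : Continuous w := continuous_iff_continuousAt.2 fun s => (hw s).continuousAt
  set F : ℝ → A := fun s => ∫ σ in a..s, (g σ * v - w σ) with hF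
  have cgw : Continuous fun σ => g σ * v - w σ := by fun_prop
  have dF : ∀ s, HasDerivAt F (g s * v - w s) s := fun s =>
    intervalIntegral.integral_hasDerivAt_right (cgw.intervalIntegrable _ _)
      (cgw.stronglyMeasurableAtFilter _ _) cgw.continuousAt
  have Fa : F a = 0 := by simp [hF]
  have Fb : F b = 0 := by
    simp only [hF]
    have cgv : Continuous fun σ => g σ * v := by fun_prop
    rw [intervalIntegral.integral_sub (cgv.intervalIntegrable _ _)
      (cw.intervalIntegrable _ _), ← hv, sub_eq_zero]
    exact ((ContinuousLinearMap.mul ℝ A).flip v).intervalIntegral_comp_comm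
      (cg.intervalIntegrable _ _)
  set q : ℝ → A := fun s => k s * F s with hq
  set d : ℝ → A := fun s => k1 s * F s + k s * (g s * v - w s) with hd
  have dq : ∀ s, HasDerivAt q (d s) s := fun s => (hk s).mul (dF s)
  have gq : ∀ s, g s * q s = F s := fun s => by
    simp only [hq]; rw [← mul_assoc, hgk, one_mul]
  have rel : ∀ s, g1 s * q s + g s * d s = g s * v - w s := fun s => by
    have h1 := (hg s).mul (dq s)
    have h2 : (g * q) = F := by ext s; exact gq s
    rw [h2] at h1
    exact h1.unique (dF s)
  have rel2 : ∀ s, g1 s * q s + w s = g s * (v - d s) := fun s => by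
    have := rel s
    rw [mul_sub, eq_sub_iff_add_eq, add_right_comm, this]; abel
  set B : ℝ → ℝ := fun s => τ (star (q s) * (g1 s * q s + (w s + w s))) with hB
  have dB : ∀ s, HasDerivAt B (τ (star (d s) * (g1 s * q s + (w s + w s)) +
      star (q s) * (g2 s * q s + g1 s * d s + (w1 s + w1 s)))) s := fun s =>
    τ.hasFDerivAt.comp_hasDerivAt s
      ((dq s).star.mul (((hg1 s).mul (dq s)).add ((hw s).add (hw s))))
  have cvh : Continuous fun s => τ (star v * g s * v) - h s := by fun_prop
  set Φ : ℝ → ℝ := fun s => (∫ σ in a..s, (τ (star v * g σ * v) - h σ)) - B s with hΦ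
  have dΦ : ∀ s, HasDerivAt Φ ((τ (star v * g s * v) - h s) -
     τ (star (d s) * (g1 s * q s + (w s + w s)) +
      star (q s) * (g2 s * q s + g1 s * d s + (w1 s + w1 s)))) s := fun s =>
    (intervalIntegral.integral_hasDerivAt_right (cvh.intervalIntegrable _ _)
      (cvh.stronglyMeasurableAtFilter _ _) cvh.continuousAt).sub (dB s)
  have sym : ∀ s X Y, τ (star X * g s * Y) = τ (star Y * g s * X) := fun s X Y => by
    rw [← hτ]; simp [sg, mul_assoc]
  have sym1 : ∀ s X Y, τ (star X * (g1 s * Y)) = τ (star Y * (g1 s * X)) := fun s X Y => by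
    rw [← hτ]; simp [sg1, mul_assoc]
  have mono : Monotone Φ := by
    apply monotone_of_deriv_nonneg (fun s => (dΦ s).differentiableAt)
    intro s
    rw [(dΦ s).deriv]
    have K := key s (q s)
    rw [rel2] at K
    have e1 : star (g s * (v - d s)) * k s * (g s * (v - d s)) =
        star (v - d s) * g s * (v - d s) := by
      rw [star_mul, sg, mul_assoc, ← mul_assoc (k s), hkg, one_mul]
    rw [e1] at K
    have e2 : τ (star (v - d s) * g s * (v - d s)) = τ (star v * g s * v)
        - 2 * τ (star (d s) * g s * v) + τ (star (d s) * g s * d s) := by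
      have : star (v - d s) * g s * (v - d s) = star v * g s * v - star v * g s * d s
        - star (d s) * g s * v + star (d s) * g s * d s := by
        rw [star_sub]; noncomm_ring
      rw [this]; simp only [map_add, map_sub]; rw [sym s v (d s)]; ring
    rw [e2] at K
    have e3 : τ (star (d s) * (g1 s * q s + (w s + w s))) =
        2 * τ (star (d s) * g s * v) - 2 * τ (star (d s) * g s * d s)
          - τ (star (d s) * (g1 s * q s)) := by
      have : star (d s) * (g1 s * q s + (w s + w s)) =
        star (d s) * (g1 s * q s + w s) + star (d s) * (g1 s * q s + w s) -
          star (d s) * (g1 s * q s) := by noncomm_ring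
      rw [this, rel2]
      simp only [mul_sub, map_add, map_sub, mul_assoc]; ring
    have e4 : τ (star (q s) * (g2 s * q s + g1 s * d s + (w1 s + w1 s))) =
      τ (star (q s) * g2 s * q s) + τ (star (d s) * (g1 s * q s)) +
        2 * τ (star (q s) * w1 s) := by
      rw [← sym1]; simp only [mul_add, map_add, mul_assoc]; ring
    rw [map_add, e3, e4]
    have := pos s (d s)
    linarith
  have fin := mono hab
  have B0 : B a = 0 := by simp [hB, hq, Fa]
  have B1 : B b = 0 := by simp [hB, hq, Fb]
  have cvg : Continuous fun s => τ (star v * g s * v) := by fun_prop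
  have I1 : ∫ σ in a..b, τ (star v * g σ * v) = τ (star v * ∫ s in a..b, w s) := by
    rw [← hv, ← mul_assoc]
    exact (τ.comp (((ContinuousLinearMap.mul ℝ A).flip v).comp
      (ContinuousLinearMap.mul ℝ A (star v)))).intervalIntegral_comp_comm
      (cg.intervalIntegrable _ _)
  simp only [hΦ, B0, B1, intervalIntegral.integral_same, sub_zero] at fin
  rw [intervalIntegral.integral_sub (cvg.intervalIntegrable _ _) (hh.intervalIntegrable _ _),
    I1] at fin
  linarith

end AbstractCore

section Param

open Set Filter Topology

variable {E F : Type*} [NormedAddCommGroup E] [NormedSpace ℝ E] [ProperSpace E]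
  [NormedAddCommGroup F] [NormedSpace ℝ F]

lemma param_hasFDerivAt {G : ℝ × E → F} (hG : ContDiff ℝ 1 G) (a b : ℝ) (x : E) :
    HasFDerivAt (fun x => ∫ s in a..b, G (s, x))
      (∫ s in a..b, (fderiv ℝ G (s, x)).comp (ContinuousLinearMap.inr ℝ ℝ E)) x := by
  have cD : Continuous fun p : ℝ × E =>
      (fderiv ℝ G p).comp (ContinuousLinearMap.inr ℝ ℝ E) :=
    (hG.continuous_fderiv (by norm_num)).clm_comp continuous_const
  have comp : IsCompact (uIcc a b ×ˢ Metric.closedBall x 1) :=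
    isCompact_uIcc.prod (isCompact_closedBall x 1)
  obtain ⟨C, hC⟩ := comp.exists_bound_of_continuousOn cD.continuousOn
  refine intervalIntegral.hasFDerivAt_integral_of_dominated_of_fderiv_le
    (F := fun x s => G (s, x))
    (F' := fun x s => (fderiv ℝ G (s, x)).comp (ContinuousLinearMap.inr ℝ ℝ E))
    (bound := fun _ => C) (Metric.closedBall_mem_nhds x one_pos) ?_ ?_ ?_ ?_ ?_ ?_
  · refine Eventually.of_forall fun y => ?_
    have : Continuous fun s => G (s, y) := hG.continuous.comp (by fun_prop)
    exact this.aestronglyMeasurable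
  · have : Continuous fun s => G (s, x) := hG.continuous.comp (by fun_prop)
    exact this.intervalIntegrable _ _
  · have : Continuous fun s : ℝ => (fderiv ℝ G (s, x)).comp (ContinuousLinearMap.inr ℝ ℝ E) :=
      cD.comp (by fun_prop : Continuous fun s : ℝ => (s, x))
    exact this.aestronglyMeasurable
  · refine Eventually.of_forall fun s hs y hy => hC (s, y) ⟨uIoc_subset_uIcc hs, hy⟩
  · simp
  · refine Eventually.of_forall fun s hs y hy => ?_
    exact ((hG.differentiable (by norm_num)) (s, y)).hasFDerivAt.comp y
      (hasFDerivAt_prodMk_right s y)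

lemma param_contDiff_one {G : ℝ × E → F} (hG : ContDiff ℝ 1 G) (a b : ℝ) :
    ContDiff ℝ 1 (fun x => ∫ s in a..b, G (s, x)) := by
  rw [contDiff_one_iff_fderiv]
  refine ⟨fun x => (param_hasFDerivAt hG a b x).differentiableAt, ?_⟩
  have : (fderiv ℝ fun x => ∫ s in a..b, G (s, x)) = fun x =>
      ∫ s in a..b, (fderiv ℝ G (s, x)).comp (ContinuousLinearMap.inr ℝ ℝ E) := by
    ext1 x; exact (param_hasFDerivAt hG a b x).fderiv
  rw [this]
  have cD : Continuous fun p : ℝ × E =>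
      (fderiv ℝ G p).comp (ContinuousLinearMap.inr ℝ ℝ E) :=
    (hG.continuous_fderiv (by norm_num)).clm_comp continuous_const
  exact intervalIntegral.continuous_parametric_intervalIntegral_of_continuous'
    (f := fun x s => (fderiv ℝ G (s, x)).comp (ContinuousLinearMap.inr ℝ ℝ E))
    (cD.comp (by fun_prop : Continuous fun p : E × ℝ => (p.2, p.1))) a b

lemma param_contDiff_two {G : ℝ × E → F} (hG : ContDiff ℝ 2 G) (a b : ℝ) :
    ContDiff ℝ 2 (fun x => ∫ s in a..b, G (s, x)) := by
  have hG1 : ContDiff ℝ 1 G := hG.of_le (by norm_num)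
  rw [show (2 : WithTop ℕ∞) = 1 + 1 by norm_num, contDiff_succ_iff_fderiv]
  refine ⟨fun x => (param_hasFDerivAt hG1 a b x).differentiableAt, by simp, ?_⟩
  have : (fderiv ℝ fun x => ∫ s in a..b, G (s, x)) = fun x =>
      ∫ s in a..b, (fderiv ℝ G (s, x)).comp (ContinuousLinearMap.inr ℝ ℝ E) := by
    ext1 x; exact (param_hasFDerivAt hG1 a b x).fderiv
  rw [this]
  exact param_contDiff_one (G := fun p =>
    (fderiv ℝ G p).comp (ContinuousLinearMap.inr ℝ ℝ E))
    ((hG.fderiv_right (by norm_num)).clm_comp contDiff_const) a b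

end Param
section NKsec

set_option linter.unusedSectionVars false

open Set Filter Topology

variable {A : Type*} [NormedRing A] [NormedAlgebra ℝ A] [StarRing A]
  [ContinuousStar A] [StarModule ℝ A]
  {E F : Type*} [NormedAddCommGroup E] [NormedSpace ℝ E]
  [NormedAddCommGroup F] [NormedSpace ℝ F]

/-- Coordinate free Nakano log concavity, tested with a trace-like functional. -/
structure NK (τ : A →L[ℝ] ℝ) (g : E → A) : Prop where
  smooth : ContDiff ℝ 2 g
  sa : ∀ x, star (g x) = g x
  pos : ∀ x X, X ≠ 0 → 0 < τ (star X * g x * X)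
  ineq : ∀ x (N : ℕ) (e : Fin N → E) (U : Fin N → A),
    ∑ j, ∑ k, τ (star (U k) * fderiv ℝ (fderiv ℝ g) x (e k) (e j) * U j) ≤
      τ (star (∑ j, fderiv ℝ g x (e j) * U j) * Ring.inverse (g x) *
        ∑ j, fderiv ℝ g x (e j) * U j)

lemma isUnit_of_pos [FiniteDimensional ℝ A] (τ : A →L[ℝ] ℝ) {g : A} (sa : star g = g)
    (pos : ∀ X, X ≠ 0 → 0 < τ (star X * g * X)) : IsUnit g := by
  have inj : Function.Injective (LinearMap.mulLeft ℝ g) := by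
    rw [← LinearMap.ker_eq_bot, LinearMap.ker_eq_bot']
    intro X hX
    by_contra h
    have := pos X h
    simp only [LinearMap.mulLeft_apply] at hX
    rw [mul_assoc, hX] at this
    simp at this
  obtain ⟨k, hk⟩ := (LinearMap.injective_iff_surjective.1 inj) 1
  simp only [LinearMap.mulLeft_apply] at hk
  have hk2 : star k * g = 1 := by
    have := congrArg star hk
    simpa [sa] using this
  have : star k = k := by
    calc star k = star k * (g * k) := by rw [hk, mul_one]
      _ = k := by rw [← mul_assoc, hk2, one_mul]
  rw [this] at hk2
  exact ⟨⟨g, k, hk, hk2⟩, rfl⟩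

lemma star_ringInverse {g : A} (sa : star g = g) (hu : IsUnit g) :
    star (Ring.inverse g) = Ring.inverse g := by
  have h1 := Ring.mul_inverse_cancel g hu
  have h2 := congrArg star h1
  simp only [star_mul, sa, star_one] at h2
  calc star (Ring.inverse g) = star (Ring.inverse g) * (g * Ring.inverse g) := by rw [h1, mul_one]
    _ = Ring.inverse g := by rw [← mul_assoc, h2, one_mul]

lemma fderiv_star_eq {g : E → A} (hg : Differentiable ℝ g) (sa : ∀ x, star (g x) = g x) (x e : E) :
    star (fderiv ℝ g x e) = fderiv ℝ g x e := by
  have h1 := (hg x).hasFDerivAt.star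
  have h2 : (fun x => star (g x)) = g := funext sa
  rw [h2] at h1
  conv_rhs => rw [h1.fderiv]
  simp

lemma hasFDerivAt_fderiv_apply {g : E → F} (hg : ContDiff ℝ 2 g) (x e : E) :
    HasFDerivAt (fun y => fderiv ℝ g y e) ((fderiv ℝ (fderiv ℝ g) x).flip e) x := by
  have h : Differentiable ℝ (fderiv ℝ g) :=
    (hg.fderiv_right (m := 1) (by norm_num)).differentiable (by norm_num)
  have := (h x).hasFDerivAt.clm_apply (hasFDerivAt_const e x)
  simpa using this

lemma fderiv2_star_eq {g : E → A} (hg : ContDiff ℝ 2 g) (sa : ∀ x, star (g x) = g x) (x e f : E) :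
    star (fderiv ℝ (fderiv ℝ g) x f e) = fderiv ℝ (fderiv ℝ g) x f e := by
  have h1 := hasFDerivAt_fderiv_apply hg x e
  have h2 := fderiv_star_eq (g := fun y => fderiv ℝ g y e)
    (fun y => (hasFDerivAt_fderiv_apply hg y e).differentiableAt)
    (fun y => fderiv_star_eq (hg.differentiable (by norm_num)) sa y e) x f
  rw [h1.fderiv] at h2
  simpa using h2

lemma fderiv2_symm {g : E → F} (hg : ContDiff ℝ 2 g) (x e f : E) :
    fderiv ℝ (fderiv ℝ g) x f e = fderiv ℝ (fderiv ℝ g) x e f :=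
  (hg.contDiffAt.isSymmSndFDerivAt (by simp)) f e

lemma fderiv2_comp {g : E → A} (hg : ContDiff ℝ 2 g) (L : F →L[ℝ] E) (x : F) (f e : F) :
    fderiv ℝ (fderiv ℝ (fun y => g (L y))) x f e = fderiv ℝ (fderiv ℝ g) (L x) (L f) (L e) := by
  have hd : Differentiable ℝ g := hg.differentiable (by norm_num)
  have h1 : fderiv ℝ (fun y => g (L y)) = fun y => (fderiv ℝ g (L y)).comp L := by
    ext1 y
    exact ((hd (L y)).hasFDerivAt.comp y L.hasFDerivAt).fderiv
  have h : Differentiable ℝ (fderiv ℝ g) :=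
    (hg.fderiv_right (m := 1) (by norm_num)).differentiable (by norm_num)
  have h2 := ((h (L x)).hasFDerivAt.comp x L.hasFDerivAt).clm_comp (hasFDerivAt_const L x)
  rw [h1]
  have h3 := h2.fderiv
  simp only [Function.comp_def] at h3
  rw [h3]
  simp

lemma fderiv_comp_lin {g : E → A} (hg : ContDiff ℝ 2 g) (L : F →L[ℝ] E) (x : F) (e : F) :
    fderiv ℝ (fun y => g (L y)) x e = fderiv ℝ g (L x) (L e) := by
  have hd : Differentiable ℝ g := hg.differentiable (by norm_num)
  have := ((hd (L x)).hasFDerivAt.comp x L.hasFDerivAt).fderiv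
  simp only [Function.comp_def] at this
  rw [this]; simp

lemma NK.comp_lin {τ : A →L[ℝ] ℝ} {g : E → A} (h : NK τ g) (L : F →L[ℝ] E) :
    NK τ (fun y => g (L y)) where
  smooth := h.smooth.comp L.contDiff
  sa x := h.sa _
  pos x := h.pos _
  ineq x N e U := by
    simp only [fderiv2_comp h.smooth, fderiv_comp_lin h.smooth]
    exact h.ineq (L x) N (fun j => L (e j)) U

lemma NK.nonneg {τ : A →L[ℝ] ℝ} {g : E → A} (h : NK τ g) (x : E) (X : A) :
    0 ≤ τ (star X * g x * X) := by
  by_cases hX : X = 0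
  · simp [hX]
  · exact (h.pos x X hX).le

lemma contDiff_ringInv [CompleteSpace A] {g : E → A} {n} (hg : ContDiff ℝ n g)
    (hu : ∀ x, IsUnit (g x)) :
    ContDiff ℝ n (fun x => Ring.inverse (g x)) := by
  rw [contDiff_iff_contDiffAt]
  intro x
  obtain ⟨u, hu⟩ := hu x
  have := contDiffAt_ringInverse (n := n) ℝ u
  rw [hu] at this
  exact this.comp x hg.contDiffAt

lemma param_fderiv_apply [ProperSpace E] [CompleteSpace F] {G : ℝ × E → F} (hG : ContDiff ℝ 1 G)
    (a b : ℝ) (x e : E) :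
    fderiv ℝ (fun x => ∫ s in a..b, G (s, x)) x e = ∫ s in a..b, fderiv ℝ G (s, x) (0, e) := by
  rw [(param_hasFDerivAt hG a b x).fderiv]
  have cD : Continuous fun s : ℝ =>
      (fderiv ℝ G (s, x)).comp (ContinuousLinearMap.inr ℝ ℝ E) :=
    ((hG.continuous_fderiv (by norm_num)).comp
      (by fun_prop : Continuous fun s : ℝ => (s, x))).clm_comp continuous_const
  rw [ContinuousLinearMap.intervalIntegral_apply (cD.intervalIntegrable _ _)]
  simp

lemma param_fderiv2_apply [ProperSpace E] [CompleteSpace F] {G : ℝ × E → F} (hG : ContDiff ℝ 2 G)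
    (a b : ℝ) (x f e : E) :
    fderiv ℝ (fderiv ℝ (fun x => ∫ s in a..b, G (s, x))) x f e =
      ∫ s in a..b, fderiv ℝ (fderiv ℝ G) (s, x) (0, f) (0, e) := by
  have hG1 : ContDiff ℝ 1 G := hG.of_le (by norm_num)
  have hI := param_contDiff_two hG a b
  have h1 := (hasFDerivAt_fderiv_apply hI x e).fderiv
  have h2 : (fun y => fderiv ℝ (fun x => ∫ s in a..b, G (s, x)) y e) = fun y =>
      ∫ s in a..b, fderiv ℝ G (s, y) (0, e) := by
    ext1 y; exact param_fderiv_apply hG1 a b y e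
  rw [h2] at h1
  have h3 := congrArg (fun T => T f) h1
  simp only [ContinuousLinearMap.flip_apply] at h3
  rw [← h3]
  rw [param_fderiv_apply (G := fun p => fderiv ℝ G p (0, e))
    ((hG.fderiv_right (by norm_num)).clm_apply contDiff_const)]
  simp only [(hasFDerivAt_fderiv_apply hG _ _).fderiv, ContinuousLinearMap.flip_apply]

lemma hasDerivAt_slice {G : ℝ × E → F} (hG : Differentiable ℝ G) (s : ℝ) (x : E) :
    HasDerivAt (fun s => G (s, x)) (fderiv ℝ G (s, x) (1, 0)) s := by
  exact (hG (s, x)).hasFDerivAt.comp_hasDerivAt s ((hasDerivAt_id s).prodMk (hasDerivAt_const s x))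

lemma NK.step [FiniteDimensional ℝ A] [ProperSpace E] {τ : A →L[ℝ] ℝ}
    (hτ : ∀ x, τ (star x) = τ x)
    {G : ℝ × E → A} (h : NK τ G) {a b : ℝ} (hab : a < b) :
    NK τ (fun x => ∫ s in a..b, G (s, x)) := by
  have : CompleteSpace A := FiniteDimensional.complete ℝ A
  have hd : Differentiable ℝ G := h.smooth.differentiable (by norm_num)
  have cG : Continuous G := hd.continuous
  have cs : ∀ x, Continuous fun s => G (s, x) := fun x => cG.comp (by fun_prop)
  have hsm := param_contDiff_two h.smooth a b
  have hsa : ∀ x, star (∫ s in a..b, G (s, x)) = ∫ s in a..b, G (s, x) := fun x => by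
    have := ((starL' ℝ : A ≃L[ℝ] A) : A →L[ℝ] A).intervalIntegral_comp_comm
      (cs x |>.intervalIntegrable (μ := volume) a b)
    simp only [ContinuousLinearEquiv.coe_coe, starL'_apply, h.sa] at this
    exact this.symm
  have hint : ∀ x X, ∫ s in a..b, τ (star X * G (s, x) * X) =
      τ (star X * (∫ s in a..b, G (s, x)) * X) := fun x X =>
    (τ.comp (((ContinuousLinearMap.mul ℝ A).flip X).comp
      (ContinuousLinearMap.mul ℝ A (star X)))).intervalIntegral_comp_comm
      ((cs x).intervalIntegrable _ _)
  have hpos : ∀ x X, X ≠ 0 → 0 < τ (star X * (∫ s in a..b, G (s, x)) * X) := fun x X hX => by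
    rw [← hint]
    have := cs x
    exact intervalIntegral.intervalIntegral_pos_of_pos
      ((by fun_prop : Continuous fun s => τ (star X * G (s, x) * X)).intervalIntegrable _ _)
      (fun s => h.pos _ X hX) hab
  refine ⟨hsm, hsa, hpos, ?_⟩
  intro x N e U
  have hu := isUnit_of_pos τ (hsa x) (hpos x)
  have huG : ∀ p, IsUnit (G p) := fun p => isUnit_of_pos τ (h.sa p) (h.pos p)
  have hG2 : ∀ p : E, Differentiable ℝ (fun q : ℝ × E => fderiv ℝ G q (0, p)) := fun p q =>
    (hasFDerivAt_fderiv_apply h.smooth q _).differentiableAt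
  have cD2 : Continuous (fderiv ℝ (fderiv ℝ G)) :=
    (h.smooth.fderiv_right (m := 1) (by norm_num)).continuous_fderiv (by norm_num)
  have cDs : ∀ e f, Continuous fun s : ℝ => fderiv ℝ (fderiv ℝ G) (s, x) e f := fun e f =>
    ((cD2.comp (by fun_prop : Continuous fun s : ℝ => (s, x))).clm_apply
      continuous_const).clm_apply continuous_const
  have cD1 : ∀ e, Continuous fun s : ℝ => fderiv ℝ G (s, x) e := fun e =>
    ((h.smooth.continuous_fderiv (by norm_num)).comp
      (by fun_prop : Continuous fun s : ℝ => (s, x))).clm_apply continuous_const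
  set w : ℝ → A := fun s => ∑ j, fderiv ℝ G (s, x) (0, e j) * U j with hw
  set w1 : ℝ → A := fun s => ∑ j, fderiv ℝ (fderiv ℝ G) (s, x) (1, 0) (0, e j) * U j with hw1
  set hh : ℝ → ℝ := fun s => ∑ j, ∑ k, τ (star (U k) *
    fderiv ℝ (fderiv ℝ G) (s, x) (0, e k) (0, e j) * U j) with hhh
  have W : ∑ j, fderiv ℝ (fun x => ∫ s in a..b, G (s, x)) x (e j) * U j =
      ∫ s in a..b, w s := by
    simp only [hw]
    rw [intervalIntegral.integral_finsetSum]
    · refine Finset.sum_congr rfl fun j _ => ?_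
      rw [param_fderiv_apply (h.smooth.of_le (by norm_num))]
      exact (((ContinuousLinearMap.mul ℝ A).flip (U j)).intervalIntegral_comp_comm
        ((cD1 (0, e j)).intervalIntegrable _ _)).symm
    · intro j _
      exact ((cD1 (0, e j)).mul continuous_const).intervalIntegrable _ _
  have H : ∑ j, ∑ k, τ (star (U k) *
      fderiv ℝ (fderiv ℝ (fun x => ∫ s in a..b, G (s, x))) x (e k) (e j) * U j) =
      ∫ s in a..b, hh s := by
    simp only [hhh]
    have cc : ∀ j k, Continuous fun s => τ (star (U k) *
      fderiv ℝ (fderiv ℝ G) (s, x) (0, e k) (0, e j) * U j) := fun j k => by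
      have := cDs (0, e k) (0, e j)
      fun_prop
    rw [intervalIntegral.integral_finsetSum]
    · refine Finset.sum_congr rfl fun j _ => ?_
      rw [intervalIntegral.integral_finsetSum]
      · refine Finset.sum_congr rfl fun k _ => ?_
        rw [param_fderiv2_apply h.smooth]
        exact ((τ.comp (((ContinuousLinearMap.mul ℝ A).flip (U j)).comp
          (ContinuousLinearMap.mul ℝ A (star (U k))))).intervalIntegral_comp_comm
          ((cDs (0, e k) (0, e j)).intervalIntegrable _ _)).symm
      · intro k _
        exact (cc j k).intervalIntegrable _ _
    · intro j _
      exact (continuous_finsetSum _ fun k _ => cc j k).intervalIntegrable _ _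
  rw [W, H]
  set v : A := Ring.inverse (∫ s in a..b, G (s, x)) * ∫ s in a..b, w s with hv
  have res := core_ineq τ hτ (g := fun s => G (s, x)) (g1 := fun s => fderiv ℝ G (s, x) (1, 0))
    (g2 := fun s => fderiv ℝ (fderiv ℝ G) (s, x) (1, 0) (1, 0))
    (k := fun s => Ring.inverse (G (s, x)))
    (k1 := fun s => fderiv ℝ (fun p => Ring.inverse (G p)) (s, x) (1, 0))
    (w := w) (w1 := w1) (h := hh) hab.le
    (fun s => hasDerivAt_slice hd s x)
    (fun s => by
      have := hasDerivAt_slice (G := fun q => fderiv ℝ G q (1, 0))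
        (fun q => (hasFDerivAt_fderiv_apply h.smooth q _).differentiableAt) s x
      rwa [(hasFDerivAt_fderiv_apply h.smooth _ _).fderiv] at this)
    (fun s => hasDerivAt_slice (G := fun p => Ring.inverse (G p))
      ((contDiff_ringInv h.smooth huG).differentiable (by norm_num)) s x)
    (fun s => by
      refine HasDerivAt.fun_sum fun j _ => ?_
      have := hasDerivAt_slice (hG2 (e j)) s x
      rw [(hasFDerivAt_fderiv_apply h.smooth _ _).fderiv] at this
      exact this.mul_const _)
    (fun s => Ring.inverse_mul_cancel _ (huG _))
    (fun s => Ring.mul_inverse_cancel _ (huG _))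
    (fun s => h.sa _) (fun s => fderiv_star_eq hd h.sa _ _)
    (fun s X => h.nonneg _ X)
    (by
      refine continuous_finsetSum _ fun j _ => continuous_finsetSum _ fun k _ => ?_
      have := cDs (0, e k) (0, e j)
      fun_prop) v
    (by rw [hv, ← mul_assoc, Ring.mul_inverse_cancel _ hu, one_mul])
    (by
      intro s X
      have key := h.ineq (s, x) (N + 1) (Fin.cons (1, 0) fun j => (0, e j)) (Fin.cons X U)
      simp only [Fin.sum_univ_succ, Fin.cons_zero, Fin.cons_succ, Finset.sum_add_distrib] at key
      have e1 : ∀ k, τ (star (U k) * fderiv ℝ (fderiv ℝ G) (s, x) (0, e k) (1, 0) * X) =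
          τ (star X * (fderiv ℝ (fderiv ℝ G) (s, x) (1, 0) (0, e k) * U k)) := fun k => by
        rw [← hτ, star_mul, star_mul, star_star, fderiv2_star_eq h.smooth h.sa,
          fderiv2_symm h.smooth]
      have e2 : τ (star X * w1 s) = ∑ k, τ (star X *
          (fderiv ℝ (fderiv ℝ G) (s, x) (1, 0) (0, e k) * U k)) := by
        simp only [hw1, Finset.mul_sum, map_sum]
      simp only [e1, ← e2] at key
      have e3 : ∑ j, τ (star X * fderiv ℝ (fderiv ℝ G) (s, x) (1, 0) (0, e j) * U j) =
          τ (star X * w1 s) := by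
        rw [e2]; simp only [mul_assoc]
      rw [e3] at key
      simp only [hhh]
      change _ ≤ τ (star (fderiv ℝ G (s, x) (1, 0) * X + ∑ j, fderiv ℝ G (s, x) (0, e j) * U j) *
        _ * (fderiv ℝ G (s, x) (1, 0) * X + ∑ j, fderiv ℝ G (s, x) (0, e j) * U j))
      linarith)
  refine res.trans (le_of_eq ?_)
  rw [hv, star_mul, star_ringInverse (hsa x) hu]

end NKsec
section Boxsec

open Set Filter Topology

set_option linter.unusedSectionVars false

lemma box_fubini {V : Type*} [NormedAddCommGroup V] [NormedSpace ℝ V] {n : ℕ} {R : ℝ}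
    (hR : 0 < R) {f : (Fin (n + 1) → ℝ) → V} (hf : Continuous f) :
    ∫ y in Icc (fun _ : Fin (n + 1) => -R) (fun _ => R), f y =
      ∫ s in (-R)..R, ∫ y in Icc (fun _ : Fin n => -R) (fun _ => R), f (Fin.cons s y) := by
  have mp := (volume_preserving_piFinSuccAbove (fun _ : Fin (n + 1) => ℝ) 0).symm
  have hap : ∀ p : ℝ × (Fin n → ℝ),
      (MeasurableEquiv.piFinSuccAbove (fun _ : Fin (n + 1) => ℝ) 0).symm p = Fin.cons p.1 p.2 := by
    intro p
    simp [MeasurableEquiv.piFinSuccAbove, Fin.consEquiv]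
  have h1 := mp.setIntegral_preimage_emb (MeasurableEquiv.measurableEmbedding _) f
    (Icc (fun _ : Fin (n + 1) => -R) (fun _ => R))
  have hpre : (MeasurableEquiv.piFinSuccAbove (fun _ : Fin (n + 1) => ℝ) 0).symm ⁻¹'
      (Icc (fun _ : Fin (n + 1) => -R) (fun _ => R)) =
      Icc (-R) R ×ˢ Icc (fun _ : Fin n => -R) (fun _ => R) := by
    ext p
    rw [mem_preimage, hap]
    simp only [mem_Icc, mem_prod, Pi.le_def, Fin.forall_fin_succ, Fin.cons_zero, Fin.cons_succ]
    tauto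
  rw [hpre] at h1
  rw [← h1]
  simp only [hap]
  have hc : Continuous fun p : ℝ × (Fin n → ℝ) => f (Fin.cons p.1 p.2) :=
    hf.comp (Continuous.finCons continuous_fst continuous_snd)
  have hi : IntegrableOn (fun p : ℝ × (Fin n → ℝ) => f (Fin.cons p.1 p.2))
      (Icc (-R) R ×ˢ Icc (fun _ : Fin n => -R) (fun _ => R)) (volume.prod volume) :=
    hc.continuousOn.integrableOn_compact (isCompact_Icc.prod isCompact_Icc)
  rw [intervalIntegral.integral_of_le (by linarith), ← integral_Icc_eq_integral_Ioc]
  exact setIntegral_prod _ hi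

variable {A : Type*} [NormedRing A] [NormedAlgebra ℝ A] [StarRing A]
  [ContinuousStar A] [StarModule ℝ A]

/-- `(y, (s, x)) ↦ (cons s y, x)`. -/
def consL (n : ℕ) (E : Type*) [NormedAddCommGroup E] [NormedSpace ℝ E] :
    (Fin n → ℝ) × (ℝ × E) →L[ℝ] (Fin (n + 1) → ℝ) × E where
  toFun p := (Fin.cons p.2.1 p.1, p.2.2)
  map_add' p q := by
    refine Prod.ext ?_ rfl
    funext i
    refine Fin.cases ?_ (fun i => ?_) i <;> simp
  map_smul' c p := by
    refine Prod.ext ?_ rfl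
    funext i
    refine Fin.cases ?_ (fun i => ?_) i <;> simp
  cont := (Continuous.finCons (by fun_prop) (by fun_prop)).prodMk (by fun_prop)

lemma NK.box [FiniteDimensional ℝ A] {τ : A →L[ℝ] ℝ}
    (hτ : ∀ x, τ (star x) = τ x) {R : ℝ} (hR : 0 < R) (n : ℕ) :
    ∀ {E : Type} [NormedAddCommGroup E] [NormedSpace ℝ E] [ProperSpace E]
    {g : (Fin n → ℝ) × E → A}, NK τ g →
    NK τ (fun x => ∫ y in Icc (fun _ : Fin n => -R) (fun _ => R), g (y, x)) := by
  have : CompleteSpace A := FiniteDimensional.complete ℝ A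
  induction n with
  | zero =>
    intro E _ _ _ g h
    have h2 := h.comp_lin (ContinuousLinearMap.inr ℝ (Fin 0 → ℝ) E)
    convert h2 using 2 with x
    have : Icc (fun _ : Fin 0 => -R) (fun _ => R) = univ := by
      ext y; simp [Pi.le_def]
    rw [this, Measure.restrict_univ, Measure.volume_pi_eq_dirac 0]
    simp
  | succ n ih =>
    intro E _ _ _ g h
    have h2 := (ih (h.comp_lin (consL n E))).step hτ (a := -R) (b := R) (by linarith)
    convert h2 using 2 with x
    have hc : Continuous g := h.smooth.continuous
    exact box_fubini hR (f := fun y => g (y, x)) (hc.comp (by fun_prop))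

end Boxsec
section Limitsec

open Set Filter Topology

set_option linter.unusedSectionVars false

variable {E V V' : Type*} [NormedAddCommGroup E] [NormedSpace ℝ E]
  [NormedAddCommGroup V] [NormedSpace ℝ V] [NormedAddCommGroup V'] [NormedSpace ℝ V']

/-- Pointwise convergence together with a locally uniform bound. -/
def LB (F : ℕ → E → V) (f : E → V) : Prop :=
  (∀ x, Tendsto (fun R => F R x) atTop (𝓝 (f x))) ∧
    ∃ c : E → ℝ, Continuous c ∧ ∀ R x, ‖F R x‖ ≤ c x

lemma LB.clm {F : ℕ → E → V} {f : E → V} (h : LB F f) (L : V →L[ℝ] V') :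
    LB (fun R x => L (F R x)) (fun x => L (f x)) := by
  obtain ⟨h1, c, hc, hb⟩ := h
  refine ⟨fun x => (L.continuous.tendsto _).comp (h1 x), fun x => ‖L‖ * c x, by fun_prop, ?_⟩
  intro R x
  exact (L.le_opNorm _).trans (mul_le_mul_of_nonneg_left (hb R x) (norm_nonneg _))

lemma LB.sum {ι : Type*} (s : Finset ι) {F : ι → ℕ → E → V} {f : ι → E → V}
    (h : ∀ i, LB (F i) (f i)) :
    LB (fun R x => ∑ i ∈ s, F i R x) (fun x => ∑ i ∈ s, f i x) := by
  choose h1 c hc hb using h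
  refine ⟨fun x => tendsto_finsetSum _ fun i _ => h1 i x, fun x => ∑ i ∈ s, c i x,
    continuous_finsetSum _ fun i _ => hc i, fun R x => ?_⟩
  exact norm_sum_le_of_le _ fun i _ => hb i R x

lemma LB.mul {A : Type*} [NormedRing A] {F F' : ℕ → E → A} {f f' : E → A}
    (h : LB F f) (h' : LB F' f') :
    LB (fun R x => F R x * F' R x) (fun x => f x * f' x) := by
  obtain ⟨h1, c, hc, hb⟩ := h
  obtain ⟨h1', c', hc', hb'⟩ := h'
  refine ⟨fun x => (h1 x).mul (h1' x), fun x => c x * c' x, hc.mul hc', fun R x => ?_⟩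
  exact (norm_mul_le _ _).trans (mul_le_mul (hb R x) (hb' R x) (norm_nonneg _)
    ((norm_nonneg _).trans (hb R x)))

lemma LB.const {A : Type*} [NormedAddCommGroup A] (a : A) :
    LB (fun _ (_ : E) => a) (fun _ => a) :=
  ⟨fun _ => tendsto_const_nhds, fun _ => ‖a‖, continuous_const, fun _ _ => le_rfl⟩

lemma LB.integral [MeasurableSpace E] [BorelSpace E] (μ : Measure E)
    [IsFiniteMeasureOnCompacts μ] {F : ℕ → E → ℝ} {f : E → ℝ} (h : LB F f)
    (hF : ∀ R, Continuous (F R)) {ψ : E → ℝ} (hψ : Continuous ψ) (hs : HasCompactSupport ψ) :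
    Tendsto (fun R => ∫ x, ψ x * F R x ∂μ) atTop (𝓝 (∫ x, ψ x * f x ∂μ)) := by
  obtain ⟨h1, c, hc, hb⟩ := h
  refine tendsto_integral_of_dominated_convergence (fun x => ‖ψ x‖ * c x) (fun R => ?_) ?_ ?_ ?_
  · exact ((hψ.mul (hF R)).integrable_of_hasCompactSupport hs.mul_right).aestronglyMeasurable
  · exact (hψ.norm.mul hc).integrable_of_hasCompactSupport hs.norm.mul_right
  · intro R
    refine Eventually.of_forall fun x => ?_
    rw [norm_mul]
    exact mul_le_mul_of_nonneg_left (hb R x) (norm_nonneg _)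
  · exact Eventually.of_forall fun x => (h1 x).const_mul _

lemma ibp2 [FiniteDimensional ℝ E] [MeasurableSpace E] [BorelSpace E] (μ : Measure E)
    [μ.IsAddHaarMeasure] {φ p : E → ℝ} (hφ : ContDiff ℝ 2 φ) (hs : HasCompactSupport φ)
    (hp : ContDiff ℝ 2 p) (f e : E) :
    ∫ x, φ x * fderiv ℝ (fderiv ℝ p) x f e ∂μ =
      ∫ x, fderiv ℝ (fderiv ℝ φ) x e f * p x ∂μ := by
  have c2 : ∀ {q : E → ℝ}, ContDiff ℝ 2 q → ∀ f e,
      Continuous fun x => fderiv ℝ (fderiv ℝ q) x f e := fun hq f e =>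
    (((hq.fderiv_right (m := 1) (by norm_num)).continuous_fderiv (by norm_num)).clm_apply
      continuous_const).clm_apply continuous_const
  have c1 : ∀ {q : E → ℝ}, ContDiff ℝ 2 q → ∀ e,
      Continuous fun x => fderiv ℝ q x e := fun hq e =>
    (hq.continuous_fderiv (by norm_num)).clm_apply continuous_const
  have e2 : ∀ {q : E → ℝ}, ContDiff ℝ 2 q → ∀ x f e,
      fderiv ℝ (fun y => fderiv ℝ q y e) x f = fderiv ℝ (fderiv ℝ q) x f e := fun hq x f e => by
    rw [(hasFDerivAt_fderiv_apply hq x e).fderiv]; rfl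
  have s1 : HasCompactSupport fun x => fderiv ℝ φ x f := hs.fderiv_apply ℝ f
  have s2 : HasCompactSupport fun x => fderiv ℝ (fderiv ℝ φ) x e f := by
    have := s1.fderiv_apply ℝ e
    simpa only [e2 hφ] using this
  have i1 := integral_mul_fderiv_eq_neg_fderiv_mul_of_integrable (μ := μ) (f := φ)
    (g := fun x => fderiv ℝ p x e) (v := f)
    (((c1 hφ f).mul (c1 hp e)).integrable_of_hasCompactSupport s1.mul_right)
    (by
      simp only [e2 hp]
      exact (hφ.continuous.mul (c2 hp f e)).integrable_of_hasCompactSupport hs.mul_right)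
    ((hφ.continuous.mul (c1 hp e)).integrable_of_hasCompactSupport hs.mul_right)
    (fun x _ => hφ.differentiable (by norm_num) x)
    (fun x _ => (hasFDerivAt_fderiv_apply hp x e).differentiableAt)
  have i2 := integral_mul_fderiv_eq_neg_fderiv_mul_of_integrable (μ := μ)
    (f := fun x => fderiv ℝ φ x f) (g := p) (v := e)
    (by
      simp only [e2 hφ]
      exact ((c2 hφ e f).mul hp.continuous).integrable_of_hasCompactSupport s2.mul_right)
    (((c1 hφ f).mul (c1 hp e)).integrable_of_hasCompactSupport s1.mul_right)
    (((c1 hφ f).mul hp.continuous).integrable_of_hasCompactSupport s1.mul_right)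
    (fun x _ => (hasFDerivAt_fderiv_apply hφ x f).differentiableAt)
    (fun x _ => hp.differentiable (by norm_num) x)
  simp only [e2 hp] at i1
  simp only [e2 hφ] at i2
  rw [i1, i2, neg_neg]

end Limitsec
section Limit2

open Set Filter Topology

set_option linter.unusedSectionVars false

variable {A : Type*} [NormedRing A] [NormedAlgebra ℝ A] [StarRing A]
  [ContinuousStar A] [StarModule ℝ A] [FiniteDimensional ℝ A] [CompleteSpace A]
  {E : Type*} [NormedAddCommGroup E] [NormedSpace ℝ E]

lemma fderiv_of_inverse {g : E → A} (hg : Differentiable ℝ g)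
    (hu : ∀ x, IsUnit (g x)) (hk : Differentiable ℝ fun x => Ring.inverse (g x)) (x e : E) :
    fderiv ℝ g x e = -(g x * fderiv ℝ (fun x => Ring.inverse (g x)) x e * g x) := by
  have h1 := (hg x).hasFDerivAt.mul' (hk x).hasFDerivAt
  have h2 : (g * fun x => Ring.inverse (g x)) = fun _ => 1 := by
    ext y; exact Ring.mul_inverse_cancel _ (hu y)
  rw [h2] at h1
  have h3 := h1.unique (hasFDerivAt_const (1 : A) x)
  have h4 := congrArg (fun T => T e) h3
  simp only [_root_.add_apply, _root_.smul_apply,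
    _root_.zero_apply, smul_eq_mul, MulOpposite.smul_eq_mul_unop,
    MulOpposite.unop_op] at h4
  have h5 := congrArg (fun a => a * g x) h4
  simp only [add_mul, zero_mul] at h5
  rw [mul_assoc (fderiv ℝ g x e), Ring.inverse_mul_cancel _ (hu x), mul_one] at h5
  rw [eq_neg_iff_add_eq_zero, add_comm]
  exact h5

lemma fderiv_inverse_eq {g : E → A} (hg : Differentiable ℝ g)
    (hu : ∀ x, IsUnit (g x)) (hk : Differentiable ℝ fun x => Ring.inverse (g x)) (x e : E) :
    fderiv ℝ (fun x => Ring.inverse (g x)) x e =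
      -(Ring.inverse (g x) * fderiv ℝ g x e * Ring.inverse (g x)) := by
  rw [fderiv_of_inverse hg hu hk]
  have h1 := Ring.mul_inverse_cancel _ (hu x)
  have h2 := Ring.inverse_mul_cancel _ (hu x)
  set k := Ring.inverse (g x)
  set d := fderiv ℝ (fun x => Ring.inverse (g x)) x e
  rw [mul_neg, neg_mul, neg_neg]
  calc d = (k * g x) * d * (g x * k) := by rw [h1, h2, one_mul, mul_one]
    _ = _ := by simp only [mul_assoc]

lemma NK.inv_nonneg {τ : A →L[ℝ] ℝ} {g : E → A} (h : NK τ g) (x : E) (X : A) :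
    0 ≤ τ (star X * Ring.inverse (g x) * X) := by
  have hu := isUnit_of_pos τ (h.sa x) (h.pos x)
  have := h.nonneg x (Ring.inverse (g x) * X)
  rw [star_mul, star_ringInverse (h.sa x) hu] at this
  rw [mul_assoc, mul_assoc, ← mul_assoc (g x), Ring.mul_inverse_cancel _ hu, one_mul,
    ← mul_assoc] at this
  exact this

/-- Convexity of the quadratic forms of the dual metric: tangent inequality. -/
lemma NK.tangent {τ : A →L[ℝ] ℝ} {g : E → A} (h : NK τ g) (x e : E) (U : A) :
    τ (star U * Ring.inverse (g x) * U) +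
      τ (star U * fderiv ℝ (fun x => Ring.inverse (g x)) x e * U) ≤
    τ (star U * Ring.inverse (g (x + e)) * U) := by
  have hu : ∀ x, IsUnit (g x) := fun x => isUnit_of_pos τ (h.sa x) (h.pos x)
  have hg : Differentiable ℝ g := h.smooth.differentiable (by norm_num)
  have hk : Differentiable ℝ fun x => Ring.inverse (g x) :=
    (contDiff_ringInv h.smooth hu).differentiable (by norm_num)
  have line : ∀ s : ℝ, HasDerivAt (fun s : ℝ => x + s • e) e s := fun s => by
    simpa using ((hasDerivAt_id s).smul_const e).const_add x
  set L : A →L[ℝ] ℝ := τ.comp (((ContinuousLinearMap.mul ℝ A).flip U).comp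
      (ContinuousLinearMap.mul ℝ A (star U))) with hL
  have hLa : ∀ a, L a = τ (star U * a * U) := fun a => rfl
  have dk : ∀ s : ℝ, HasDerivAt (fun s : ℝ => Ring.inverse (g (x + s • e)))
      (fderiv ℝ (fun x => Ring.inverse (g x)) (x + s • e) e) s := fun s =>
    HasFDerivAt.comp_hasDerivAt (l := fun x => Ring.inverse (g x)) s
      (hk (x + s • e)).hasFDerivAt (line s)
  have dg1 : ∀ s : ℝ, HasDerivAt (fun s : ℝ => fderiv ℝ g (x + s • e) e)
      (fderiv ℝ (fderiv ℝ g) (x + s • e) e e) s := fun s =>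
    HasFDerivAt.comp_hasDerivAt (l := fun y => fderiv ℝ g y e)
      (l' := (fderiv ℝ (fderiv ℝ g) (x + s • e)).flip e) s
      (hasFDerivAt_fderiv_apply h.smooth (x + s • e) e) (line s)
  have dL : ∀ s : ℝ, HasDerivAt (fun s : ℝ => L (Ring.inverse (g (x + s • e))))
      (L (fderiv ℝ (fun x => Ring.inverse (g x)) (x + s • e) e)) s := fun s =>
    L.hasFDerivAt.comp_hasDerivAt s (dk s)
  have mono : Monotone fun s : ℝ =>
      L (fderiv ℝ (fun x => Ring.inverse (g x)) (x + s • e) e) := by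
    simp only [fderiv_inverse_eq hg hu hk]
    have D : ∀ s : ℝ, HasDerivAt (fun s : ℝ => L (-(Ring.inverse (g (x + s • e)) *
      fderiv ℝ g (x + s • e) e * Ring.inverse (g (x + s • e))))) _ s := fun s =>
      L.hasFDerivAt.comp_hasDerivAt s (((dk s).mul (dg1 s)).mul (dk s)).neg
    refine monotone_of_deriv_nonneg (fun s => (D s).differentiableAt) fun s => ?_
    rw [(D s).deriv, fderiv_inverse_eq hg hu hk]
    set y := x + s • e
    have sk := star_ringInverse (h.sa y) (hu y)
    have sg1 := fderiv_star_eq hg h.sa y e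
    have I := h.ineq y 1 (fun _ => e) (fun _ => Ring.inverse (g y) * U)
    have P := h.inv_nonneg y (fderiv ℝ g y e * (Ring.inverse (g y) * U))
    simp only [Finset.univ_unique, Finset.sum_singleton] at I
    set k := Ring.inverse (g y)
    set g1 := fderiv ℝ g y e
    set g2 := fderiv ℝ (fderiv ℝ g) y e e
    have e1 : star (g1 * (k * U)) * k * (g1 * (k * U)) = star U * (k * g1 * k * g1 * k) * U := by
      simp only [star_mul, sk, sg1, mul_assoc]
    have e2 : star (k * U) * g2 * (k * U) = star U * (k * g2 * k) * U := by
      simp only [star_mul, sk, mul_assoc]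
    rw [e1, e2] at I
    rw [e1] at P
    rw [← hLa] at I P
    rw [← hLa] at I
    have e3 : -((-(k * g1 * k) * g1 + k * g2) * k + k * g1 * -(k * g1 * k)) =
      k * g1 * k * g1 * k + k * g1 * k * g1 * k - k * g2 * k := by noncomm_ring
    change 0 ≤ L (-((-(k * g1 * k) * g1 + k * g2) * k + k * g1 * -(k * g1 * k)))
    rw [e3, map_sub, map_add]
    linarith
  obtain ⟨c, hc, hc2⟩ := exists_hasDerivAt_eq_slope (fun s : ℝ => L (Ring.inverse (g (x + s • e))))
    _ zero_lt_one (fun s _ => (dL s).continuousAt.continuousWithinAt) (fun s _ => dL s)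
  have m := mono hc.1.le
  simp only [hc2, zero_smul, add_zero, one_smul, sub_zero, div_one] at m
  rw [← hLa, ← hLa, ← hLa]
  linarith

lemma inv_antitone {τ : A →L[ℝ] ℝ} {g g' : A}
    (sa : star g = g) (sa' : star g' = g')
    (hu : IsUnit g) (hu' : IsUnit g') (pos : ∀ X, 0 ≤ τ (star X * g * X))
    (hle : ∀ X, τ (star X * g * X) ≤ τ (star X * g' * X)) (U : A) :
    τ (star U * Ring.inverse g' * U) ≤ τ (star U * Ring.inverse g * U) := by
  have sk := star_ringInverse sa hu
  have sk' := star_ringInverse sa' hu'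
  have h1 := Ring.mul_inverse_cancel _ hu
  have h1' := Ring.mul_inverse_cancel _ hu'
  have h2 := Ring.inverse_mul_cancel _ hu
  set k := Ring.inverse g
  set k' := Ring.inverse g'
  have a := hle (k' * U)
  have b := pos (k' * U - k * U)
  have e1 : star (k' * U) * g' * (k' * U) = star U * k' * U := by
    rw [star_mul, sk', mul_assoc, mul_assoc, ← mul_assoc g', h1', one_mul, mul_assoc]
  have e2 : star (k' * U - k * U) * g * (k' * U - k * U) =
      star (k' * U) * g * (k' * U) - star U * (k' * (g * k)) * U - star U * ((k * g) * k') * U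
        + star U * (k * (g * k)) * U := by
    rw [star_sub, star_mul, star_mul, sk, sk']; noncomm_ring
  rw [e1] at a
  rw [e2, h1, h2, mul_one, one_mul, mul_one] at b
  simp only [map_add, map_sub] at b
  linarith

lemma LB.of_quad {τ : A →L[ℝ] ℝ} {σ : Type*} [Fintype σ] {S B : σ → A}
    (rec : ∀ K : A, star K = K → K = ∑ i, τ (star (S i) * K * S i) • B i)
    {F : ℕ → E → A} {f : E → A} (hF : ∀ R x, star (F R x) = F R x) (hf : ∀ x, star (f x) = f x)
    (h : ∀ i, LB (fun R x => τ (star (S i) * F R x * S i)) (fun x => τ (star (S i) * f x * S i))) :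
    LB F f := by
  have h1 := LB.sum Finset.univ fun i => (h i).clm ((ContinuousLinearMap.id ℝ ℝ).smulRight (B i))
  have e1 : (fun R x => ∑ i, (ContinuousLinearMap.id ℝ ℝ).smulRight (B i)
      (τ (star (S i) * F R x * S i))) = F := by
    funext R x
    conv_rhs => rw [rec _ (hF R x)]
    simp
  have e2 : (fun x => ∑ i, (ContinuousLinearMap.id ℝ ℝ).smulRight (B i)
      (τ (star (S i) * f x * S i))) = f := by
    funext x
    conv_rhs => rw [rec _ (hf x)]
    simp
  rw [e1, e2] at h1
  exact h1

/-- Convergence of directional derivatives. -/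
lemma deriv_tendsto {F : ℕ → E → ℝ} {f : E → ℝ} {DF : ℕ → E →L[ℝ] ℝ} {Df : E →L[ℝ] ℝ} (x : E)
    (conv : ∀ x, Tendsto (fun R => F R x) atTop (𝓝 (f x)))
    (tan : ∀ R e, F R x + DF R e ≤ F R (x + e)) (hf : HasFDerivAt f Df x) (e : E) :
    Tendsto (fun R => DF R e) atTop (𝓝 (Df e)) := by
  have up : ∀ e a, Df e < a → ∀ᶠ R in atTop, DF R e < a := by
    intro e a ha
    have hl : HasDerivAt (fun s : ℝ => f (x + s • e)) (Df e) 0 := by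
      have line : HasDerivAt (fun s : ℝ => x + s • e) e 0 := by
        simpa using ((hasDerivAt_id (0 : ℝ)).smul_const e).const_add x
      have hf' : HasFDerivAt f Df (x + (0 : ℝ) • e) := by simpa using hf
      exact hf'.comp_hasDerivAt 0 line
    have sl := hl.tendsto_slope_zero_right
    obtain ⟨s, hs, hs0⟩ := ((sl.eventually_lt_const ha).and self_mem_nhdsWithin).exists
    simp only [zero_add, zero_smul, add_zero, smul_eq_mul] at hs
    have c1 : Tendsto (fun R => s⁻¹ * (F R (x + s • e) - F R x)) atTop
        (𝓝 (s⁻¹ * (f (x + s • e) - f x))) := ((conv _).sub (conv _)).const_mul _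
    filter_upwards [c1.eventually_lt_const hs] with R hR
    have t := tan R (s • e)
    rw [map_smul, smul_eq_mul] at t
    have hs0' : (0 : ℝ) < s := hs0
    refine lt_of_le_of_lt ?_ hR
    rw [inv_mul_eq_div, le_div_iff₀ hs0']
    linarith
  rw [tendsto_order]
  refine ⟨fun a ha => ?_, fun a ha => up e a ha⟩
  have := up (-e) (-a) (by rw [map_neg]; linarith)
  filter_upwards [this] with R hR
  rw [map_neg] at hR
  linarith

lemma NK.limit [FiniteDimensional ℝ E] [MeasurableSpace E] [BorelSpace E] (μ : Measure E)
    [μ.IsAddHaarMeasure]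
    {τ : A →L[ℝ] ℝ} {σ : Type*} [Fintype σ] {S B : σ → A}
    (rec : ∀ K : A, star K = K → K = ∑ i, τ (star (S i) * K * S i) • B i)
    {G : ℕ → E → A} (hG : ∀ R, NK τ (G R)) {g : E → A} (smooth : ContDiff ℝ 2 g)
    (sa : ∀ x, star (g x) = g x) (pos : ∀ x X, X ≠ 0 → 0 < τ (star X * g x * X))
    (lo : ∀ R x X, τ (star X * G 0 x * X) ≤ τ (star X * G R x * X))
    (hi : ∀ R x X, τ (star X * G R x * X) ≤ τ (star X * g x * X))
    (conv : ∀ x, Tendsto (fun R => G R x) atTop (𝓝 (g x))) : NK τ g := by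
  refine ⟨smooth, sa, pos, ?_⟩
  intro x0 N e U
  have hu : ∀ x, IsUnit (g x) := fun x => isUnit_of_pos τ (sa x) (pos x)
  have huG : ∀ R x, IsUnit (G R x) := fun R x => isUnit_of_pos τ ((hG R).sa x) ((hG R).pos x)
  have hgd : Differentiable ℝ g := smooth.differentiable (by norm_num)
  have hGd : ∀ R, Differentiable ℝ (G R) := fun R => (hG R).smooth.differentiable (by norm_num)
  have hkc := contDiff_ringInv smooth hu
  have hkd : Differentiable ℝ fun x => Ring.inverse (g x) := hkc.differentiable (by norm_num)
  have hKc := fun R => contDiff_ringInv (hG R).smooth (huG R)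
  have hKd : ∀ R, Differentiable ℝ fun x => Ring.inverse (G R x) := fun R =>
    (hKc R).differentiable (by norm_num)
  have sk := fun x => star_ringInverse (sa x) (hu x)
  have sK := fun R x => star_ringInverse ((hG R).sa x) (huG R x)
  have cL : ∀ X : A, Continuous fun a : A => τ (star X * a * X) := fun X => by fun_prop
  have cg := smooth.continuous
  have ck := hkc.continuous
  have cK0 := (hKc 0).continuous
  -- the metrics
  have LBg : LB G g := by
    refine LB.of_quad rec (fun R => (hG R).sa) sa fun i =>
      ⟨fun x => ((cL _).tendsto _).comp (conv x), fun x => τ (star (S i) * g x * S i),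
        (cL _).comp cg, fun R x => ?_⟩
    rw [Real.norm_of_nonneg ((hG R).nonneg _ _)]
    exact hi R x _
  -- the dual metrics
  have convk : ∀ x, Tendsto (fun R => Ring.inverse (G R x)) atTop (𝓝 (Ring.inverse (g x))) := by
    intro x
    obtain ⟨u, hu⟩ := hu x
    have := NormedRing.inverse_continuousAt u
    rw [hu] at this
    exact this.tendsto.comp (conv x)
  have anti : ∀ R x X, τ (star X * Ring.inverse (G R x) * X) ≤
      τ (star X * Ring.inverse (G 0 x) * X) := fun R x X =>
    inv_antitone ((hG 0).sa x) ((hG R).sa x) (huG 0 x) (huG R x) ((hG 0).nonneg x)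
      (lo R x) X
  have LBk : LB (fun R x => Ring.inverse (G R x)) (fun x => Ring.inverse (g x)) := by
    refine LB.of_quad rec sK sk fun i =>
      ⟨fun x => ((cL _).tendsto _).comp (convk x),
        fun x => τ (star (S i) * Ring.inverse (G 0 x) * S i),
        (cL _).comp cK0, fun R x => ?_⟩
    rw [Real.norm_of_nonneg ((hG R).inv_nonneg _ _)]
    exact anti R x _
  -- derivatives of the dual metrics
  have LBdk : ∀ v, LB (fun R x => fderiv ℝ (fun x => Ring.inverse (G R x)) x v)
      (fun x => fderiv ℝ (fun x => Ring.inverse (g x)) x v) := by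
    intro v
    refine LB.of_quad rec (fun R x => fderiv_star_eq (hKd R) (sK R) x v)
      (fun x => fderiv_star_eq hkd sk x v) fun i => ?_
    set L : A →L[ℝ] ℝ := τ.comp (((ContinuousLinearMap.mul ℝ A).flip (S i)).comp
      (ContinuousLinearMap.mul ℝ A (star (S i)))) with hL
    refine ⟨fun x => ?_, fun x => L (Ring.inverse (G 0 (x + v))) + L (Ring.inverse (G 0 (x - v))),
      ?_, fun R x => ?_⟩
    · exact deriv_tendsto (F := fun R x => L (Ring.inverse (G R x)))
        (f := fun x => L (Ring.inverse (g x)))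
        (DF := fun R => L.comp (fderiv ℝ (fun x => Ring.inverse (G R x)) x))
        (Df := L.comp (fderiv ℝ (fun x => Ring.inverse (g x)) x)) x
        (fun y => (L.continuous.tendsto _).comp (convk y))
        (fun R e => (hG R).tangent x e (S i))
        (L.hasFDerivAt.comp x (hkd x).hasFDerivAt) v
    · exact (L.continuous.comp (cK0.comp (by fun_prop))).add
        (L.continuous.comp (cK0.comp (by fun_prop)))
    · have t1 := (hG R).tangent x v (S i)
      have t2 := (hG R).tangent x (-v) (S i)
      have p0 := (hG R).inv_nonneg x (S i)
      have a1 := anti R (x + v) (S i)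
      have a2 := anti R (x - v) (S i)
      have p1 := (hG 0).inv_nonneg (x + v) (S i)
      have p2 := (hG 0).inv_nonneg (x - v) (S i)
      rw [map_neg, mul_neg, neg_mul, map_neg, ← sub_eq_add_neg x v] at t2
      change ‖τ _‖ ≤ τ (star (S i) * _ * S i) + τ (star (S i) * _ * S i)
      rw [Real.norm_eq_abs, abs_le]
      constructor <;> linarith
  -- derivatives of the metrics
  have LBdg : ∀ v, LB (fun R x => fderiv ℝ (G R) x v) (fun x => fderiv ℝ g x v) := by
    intro v
    have := ((LBg.mul (LBdk v)).mul LBg).clm (-ContinuousLinearMap.id ℝ A)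
    simp only [_root_.neg_apply, ContinuousLinearMap.id_apply] at this
    simp only [fun R x => fderiv_of_inverse (hGd R) (huG R) (hKd R) x v,
      fun x => fderiv_of_inverse hgd hu hkd x v]
    exact this
  have LBW : LB (fun R x => ∑ j, fderiv ℝ (G R) x (e j) * U j)
      (fun x => ∑ j, fderiv ℝ g x (e j) * U j) :=
    LB.sum _ fun j => (LBdg (e j)).mul (LB.const (U j))
  have LBN := ((((LBW.clm ((starL' ℝ : A ≃L[ℝ] A) : A →L[ℝ] A)).mul LBk).mul LBW).clm τ)
  simp only [ContinuousLinearEquiv.coe_coe, starL'_apply] at LBN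
  set NR : ℕ → E → ℝ := fun R x => τ (star (∑ j, fderiv ℝ (G R) x (e j) * U j) *
    Ring.inverse (G R x) * ∑ j, fderiv ℝ (G R) x (e j) * U j) with hNR
  set Nn : E → ℝ := fun x => τ (star (∑ j, fderiv ℝ g x (e j) * U j) *
    Ring.inverse (g x) * ∑ j, fderiv ℝ g x (e j) * U j) with hNn
  set L : Fin N → Fin N → (A →L[ℝ] ℝ) := fun j k =>
    τ.comp (((ContinuousLinearMap.mul ℝ A).flip (U j)).comp
      (ContinuousLinearMap.mul ℝ A (star (U k)))) with hL
  have D2 : ∀ {q : E → A}, ContDiff ℝ 2 q → ∀ j k x, fderiv ℝ (fderiv ℝ (fun y => L j k (q y))) x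
      (e k) (e j) = τ (star (U k) * fderiv ℝ (fderiv ℝ q) x (e k) (e j) * U j) := by
    intro q hq j k x
    have hqd : Differentiable ℝ q := hq.differentiable (by norm_num)
    have hLq : ContDiff ℝ 2 fun y => L j k (q y) := (L j k).contDiff.comp hq
    have h1 : (fun y => fderiv ℝ (fun y => L j k (q y)) y (e j)) =
        fun y => L j k (fderiv ℝ q y (e j)) := by
      funext y
      exact congrArg (fun T => T (e j))
        ((L j k).hasFDerivAt.comp y (hqd y).hasFDerivAt).fderiv
    have h2 := hasFDerivAt_fderiv_apply hLq x (e j)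
    rw [h1] at h2
    have h3 := (L j k).hasFDerivAt.comp x (hasFDerivAt_fderiv_apply hq x (e j))
    exact congrArg (fun T => T (e k)) (h2.unique h3)
  have cW : ∀ {q : E → A}, ContDiff ℝ 2 q → Continuous fun x => ∑ j, fderiv ℝ q x (e j) * U j := by
    intro q hq
    refine continuous_finsetSum _ fun j _ => ?_
    exact ((hq.continuous_fderiv (by norm_num)).clm_apply continuous_const).mul continuous_const
  have cN : Continuous Nn := by
    have := cW smooth
    fun_prop
  have cNR : ∀ R, Continuous (NR R) := fun R => by
    have := cW (hG R).smooth
    have := (hKc R).continuous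
    fun_prop
  have cD2 : ∀ {q : E → A}, ContDiff ℝ 2 q → ∀ j k, Continuous fun x =>
      fderiv ℝ (fderiv ℝ (fun y => L j k (q y))) x (e k) (e j) := by
    intro q hq j k
    have hLq : ContDiff ℝ 2 fun y => L j k (q y) := (L j k).contDiff.comp hq
    exact (((hLq.fderiv_right (m := 1) (by norm_num)).continuous_fderiv (by norm_num)).clm_apply
      continuous_const).clm_apply continuous_const
  set H : E → ℝ := fun x => ∑ j, ∑ k, fderiv ℝ (fderiv ℝ (fun y => L j k (g y))) x (e k) (e j)
    with hH
  have cH : Continuous H :=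
    continuous_finsetSum _ fun j _ => continuous_finsetSum _ fun k _ => cD2 smooth j k
  have goal1 : ∑ j, ∑ k, τ (star (U k) * fderiv ℝ (fderiv ℝ g) x0 (e k) (e j) * U j) = H x0 := by
    simp only [hH, D2 smooth]
  rw [goal1]
  change H x0 ≤ Nn x0
  by_contra hcon
  push Not at hcon
  have hev : ∀ᶠ x in 𝓝 x0, Nn x < H x := cN.continuousAt.eventually_lt cH.continuousAt hcon
  obtain ⟨δ, hδ, hball⟩ := Metric.eventually_nhds_iff_ball.1 hev
  let φ : ContDiffBump x0 := ⟨δ / 2, δ, by positivity, by linarith⟩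
  have φc : ContDiff ℝ 2 φ := φ.contDiff
  have φs : HasCompactSupport φ := φ.hasCompactSupport
  have posI : 0 < ∫ x, φ x * (H x - Nn x) ∂μ := by
    refine Continuous.integral_pos_of_hasCompactSupport_nonneg_nonzero
      (f := fun x => φ x * (H x - Nn x)) (x := x0)
      (φc.continuous.mul (cH.sub cN)) φs.mul_right ?_ ?_
    · intro x
      by_cases hx : x ∈ Metric.ball x0 δ
      · exact mul_nonneg φ.nonneg (by linarith [hball x hx])
      · have : φ x = 0 := by
          by_contra h0
          exact hx (by rw [← φ.support_eq]; exact h0)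
        simp [this]
    · have : φ x0 = 1 := φ.one_of_mem_closedBall (by simp [φ.rIn_pos.le])
      rw [this, one_mul]
      linarith
  -- integrated identity
  have ident : ∀ {q : E → A}, ContDiff ℝ 2 q →
      ∫ x, φ x * (∑ j, ∑ k, fderiv ℝ (fderiv ℝ (fun y => L j k (q y))) x (e k) (e j)) ∂μ =
      ∑ j, ∑ k, ∫ x, fderiv ℝ (fderiv ℝ φ) x (e j) (e k) * L j k (q x) ∂μ := by
    intro q hq
    simp only [Finset.mul_sum]
    rw [integral_finsetSum]
    · refine Finset.sum_congr rfl fun j _ => ?_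
      rw [integral_finsetSum]
      · refine Finset.sum_congr rfl fun k _ => ?_
        exact ibp2 μ φc φs ((L j k).contDiff.comp hq) (e k) (e j)
      · intro k _
        exact (φc.continuous.mul (cD2 hq j k)).integrable_of_hasCompactSupport φs.mul_right
    · intro j _
      exact integrable_finsetSum _ fun k _ =>
        (φc.continuous.mul (cD2 hq j k)).integrable_of_hasCompactSupport φs.mul_right
  have lim1 : Tendsto (fun R => ∑ j, ∑ k, ∫ x, fderiv ℝ (fderiv ℝ φ) x (e j) (e k) *
      L j k (G R x) ∂μ) atTop (𝓝 (∑ j, ∑ k, ∫ x, fderiv ℝ (fderiv ℝ φ) x (e j) (e k) *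
      L j k (g x) ∂μ)) := by
    refine tendsto_finsetSum _ fun j _ => tendsto_finsetSum _ fun k _ => ?_
    refine (LBg.clm (L j k)).integral μ (fun R => (L j k).continuous.comp (hG R).smooth.continuous)
      ?_ ?_
    · exact (((φc.fderiv_right (m := 1) (by norm_num)).continuous_fderiv (by norm_num)).clm_apply
      continuous_const).clm_apply continuous_const
    · have := (φs.fderiv_apply ℝ (e k)).fderiv_apply ℝ (e j)
      simpa only [(hasFDerivAt_fderiv_apply φc _ _).fderiv, ContinuousLinearMap.flip_apply]
        using this
  have lim2 := LBN.integral μ cNR φc.continuous φs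
  have le := le_of_tendsto_of_tendsto' lim1 lim2 (fun R => by
    rw [← ident (hG R).smooth]
    refine integral_mono ?_ ?_ fun x => ?_
    · exact (φc.continuous.mul (continuous_finsetSum _ fun j _ => continuous_finsetSum _ fun k _ =>
        cD2 (hG R).smooth j k)).integrable_of_hasCompactSupport φs.mul_right
    · exact (φc.continuous.mul (cNR R)).integrable_of_hasCompactSupport φs.mul_right
    · refine mul_le_mul_of_nonneg_left ?_ φ.nonneg
      simp only [D2 (hG R).smooth]
      exact (hG R).ineq x N e U)
  rw [← ident smooth] at le
  have : ∫ x, φ x * (H x - Nn x) ∂μ = ∫ x, φ x * H x ∂μ - ∫ x, φ x * Nn x ∂μ := by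
    simp only [mul_sub]
    exact integral_sub ((φc.continuous.mul cH).integrable_of_hasCompactSupport φs.mul_right)
      ((φc.continuous.mul cN).integrable_of_hasCompactSupport φs.mul_right)
  linarith

end Limit2
section MatrixTranslation

open Set Filter Topology
open scoped Matrix.Norms.Frobenius

/-- Real part of the trace, as a continuous real functional. -/
noncomputable def reTr (r : ℕ) : Matrix (Fin r) (Fin r) ℂ →L[ℝ] ℝ :=
  LinearMap.toContinuousLinearMap
    (Complex.reLm ∘ₗ (Matrix.traceLinearMap (Fin r) ℝ ℂ))

lemma reTr_apply {r : ℕ} (X : Matrix (Fin r) (Fin r) ℂ) : reTr r X = (X.trace).re := rfl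

lemma reTr_star {r : ℕ} (X : Matrix (Fin r) (Fin r) ℂ) : reTr r (star X) = reTr r X := by
  rw [reTr_apply, reTr_apply, Matrix.star_eq_conjTranspose, Matrix.trace_conjTranspose]
  simp

/-- The entry functional. -/
noncomputable def entryL {r : ℕ} (a b : Fin r) : Matrix (Fin r) (Fin r) ℂ →L[ℝ] ℂ :=
  LinearMap.toContinuousLinearMap (Matrix.entryLinearMap ℝ ℂ a b)

lemma entryL_apply {r : ℕ} (a b : Fin r) (X : Matrix (Fin r) (Fin r) ℂ) :
    entryL a b X = X a b := rfl

/-- The elementary matrix embedding. -/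
noncomputable def singleL {r : ℕ} (a b : Fin r) : ℂ →L[ℝ] Matrix (Fin r) (Fin r) ℂ :=
  LinearMap.toContinuousLinearMap (Matrix.singleLinearMap ℝ a b)

lemma singleL_apply {r : ℕ} (a b : Fin r) (z : ℂ) :
    singleL a b z = Matrix.single a b z := rfl

lemma mat_contDiff {r : ℕ} {E : Type*} [NormedAddCommGroup E] [NormedSpace ℝ E]
    {N : WithTop ℕ∞}
    {g : E → Matrix (Fin r) (Fin r) ℂ} :
    ContDiff ℝ N g ↔ ∀ a b, ContDiff ℝ N fun x => g x a b := by
  constructor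
  · intro h a b
    exact (entryL a b).contDiff.comp h
  · intro h
    have : g = fun x => ∑ a, ∑ b, singleL a b (g x a b) := by
      funext x
      simp only [singleL_apply]
      exact Matrix.matrix_eq_sum_single (g x)
    rw [this]
    exact ContDiff.sum fun a _ => ContDiff.sum fun b _ => (singleL a b).contDiff.comp (h a b)

noncomputable local instance matCENorm {r : ℕ} :
    ContinuousENorm (Matrix (Fin r) (Fin r) ℂ) :=
  (SeminormedAddGroup.toContinuousENorm : ContinuousENorm (Matrix (Fin r) (Fin r) ℂ))

lemma mat_integrable {r : ℕ} {X : Type*} [MeasurableSpace X] {μ : Measure X}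
    {g : X → Matrix (Fin r) (Fin r) ℂ}
    (h : ∀ a b, Integrable (fun x => g x a b) μ) : Integrable g μ := by
  have : g = fun x => ∑ a, ∑ b, singleL a b (g x a b) := by
    funext x
    simp only [singleL_apply]
    exact Matrix.matrix_eq_sum_single (g x)
  rw [this]
  exact integrable_finsetSum _ fun a _ => integrable_finsetSum _ fun b _ =>
    (singleL a b).integrable_comp (h a b)

lemma mpd_eq {ι : Type*} [Fintype ι] [DecidableEq ι] {r : ℕ} (j : ι)
    {g : (ι → ℝ) → Matrix (Fin r) (Fin r) ℂ} {x : ι → ℝ} (h : DifferentiableAt ℝ g x) :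
    mpd j g x = fderiv ℝ g x (Pi.single j 1) := by
  ext a b
  have := ((entryL a b).hasFDerivAt.comp x h.hasFDerivAt).fderiv
  have e : (entryL a b) ∘ g = fun y => g y a b := rfl
  rw [e] at this
  simp only [mpd, pdC, Matrix.of_apply, this]
  rfl

lemma alg_curv {A : Type*} [NormedRing A] [NormedAlgebra ℝ A] [CompleteSpace A] [StarRing A]
    [ContinuousStar A] [StarModule ℝ A] [FiniteDimensional ℝ A]
    {E : Type*} [NormedAddCommGroup E] [NormedSpace ℝ E]
    {g : E → A} (hg : ContDiff ℝ 2 g) (hu : ∀ x, IsUnit (g x)) (e f x : E) :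
    DifferentiableAt ℝ (fun y => Ring.inverse (g y) * fderiv ℝ g y f) x ∧
    g x * fderiv ℝ (fun y => Ring.inverse (g y) * fderiv ℝ g y f) x e =
      fderiv ℝ (fderiv ℝ g) x e f - fderiv ℝ g x e * Ring.inverse (g x) * fderiv ℝ g x f := by
  have hd : Differentiable ℝ g := hg.differentiable (by norm_num)
  have hk : Differentiable ℝ (fun x => Ring.inverse (g x)) :=
    (contDiff_ringInv hg hu).differentiable (by norm_num)
  have D : HasFDerivAt (fun y => Ring.inverse (g y) * fderiv ℝ g y f) _ x :=
    (hk x).hasFDerivAt.mul' (hasFDerivAt_fderiv_apply hg x f)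
  have c : g x * Ring.inverse (g x) = 1 := Ring.mul_inverse_cancel _ (hu x)
  refine ⟨D.differentiableAt, ?_⟩
  rw [D.fderiv]
  simp only [_root_.add_apply, _root_.smul_apply, smul_eq_mul,
    ContinuousLinearMap.flip_apply, MulOpposite.smul_eq_mul_unop, MulOpposite.unop_op]
  rw [fderiv_inverse_eq hd hu hk]
  simp only [mul_add, mul_neg, neg_mul, ← mul_assoc, c, one_mul]
  abel

lemma g_mul_Theta {ι : Type*} [Fintype ι] [DecidableEq ι] {r : ℕ}
    {g : (ι → ℝ) → Matrix (Fin r) (Fin r) ℂ} (hg : ContDiff ℝ 2 g) (hu : ∀ x, IsUnit (g x))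
    (j k : ι) (x : ι → ℝ) :
    g x * Theta g j k x = fderiv ℝ (fderiv ℝ g) x (Pi.single k 1) (Pi.single j 1) -
      fderiv ℝ g x (Pi.single k 1) * Ring.inverse (g x) * fderiv ℝ g x (Pi.single j 1) := by
  have hd : Differentiable ℝ g := hg.differentiable (by norm_num)
  have e : (fun y => (g y)⁻¹ * mpd j g y) =
      fun y => Ring.inverse (g y) * fderiv ℝ g y (Pi.single j 1) := by
    funext y
    rw [mpd_eq j (hd y), Matrix.nonsing_inv_eq_ringInverse]
  have D := alg_curv hg hu (Pi.single k 1) (Pi.single j 1) x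
  have h1 := mpd_eq k D.1
  rw [Theta, e]
  exact (congrArg (fun z => g x * z) h1).trans D.2

lemma trace_cols {r : ℕ} (V M U : Matrix (Fin r) (Fin r) ℂ) :
    (star V * M * U).trace = ∑ c, star (fun a => V a c) ⬝ᵥ M *ᵥ (fun a => U a c) := by
  simp only [Matrix.trace, Matrix.diag_apply, Matrix.mul_assoc]
  rfl

lemma rank_two_expand {ι : Type*} [Fintype ι] {r N : ℕ}
    (τ : Matrix (Fin r) (Fin r) ℂ →L[ℝ] ℝ)
    (B : ι → ι → Matrix (Fin r) (Fin r) ℂ) (e : Fin N → ι → ℝ)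
    (U : Fin N → Matrix (Fin r) (Fin r) ℂ) :
    ∑ j, ∑ k, τ (star (U k) * (∑ l, ∑ p, (e k l * e j p) • B l p) * U j) =
    ∑ p, ∑ l, τ (star (∑ k, e k l • U k) * B l p * ∑ j, e j p • U j) := by
  simp only [star_sum, Finset.sum_mul, Finset.mul_sum, map_sum, star_smul, star_trivial,
    smul_mul_assoc, mul_smul_comm, map_smul, smul_eq_mul]
  calc _ = ∑ j, ∑ k, ∑ p, ∑ l, e k l * e j p * τ (star (U k) * B l p * U j) :=
        Finset.sum_congr rfl fun j _ => Finset.sum_congr rfl fun k _ => Finset.sum_comm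
    _ = ∑ j, ∑ p, ∑ k, ∑ l, e k l * e j p * τ (star (U k) * B l p * U j) :=
        Finset.sum_congr rfl fun j _ => Finset.sum_comm
    _ = ∑ p, ∑ j, ∑ k, ∑ l, e k l * e j p * τ (star (U k) * B l p * U j) :=
        Finset.sum_comm
    _ = ∑ p, ∑ j, ∑ l, ∑ k, e k l * e j p * τ (star (U k) * B l p * U j) :=
        Finset.sum_congr rfl fun j _ => Finset.sum_congr rfl fun k _ => Finset.sum_comm
    _ = ∑ p, ∑ l, ∑ j, ∑ k, e k l * e j p * τ (star (U k) * B l p * U j) :=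
        Finset.sum_congr rfl fun j _ => Finset.sum_comm
    _ = _ := by
        refine Finset.sum_congr rfl fun p _ => Finset.sum_congr rfl fun l _ =>
          Finset.sum_congr rfl fun j _ => Finset.sum_congr rfl fun k _ => ?_
        ring

/-- The curvature form, as a bilinear map. -/
noncomputable def curvB {A : Type*} [NormedRing A] [NormedAlgebra ℝ A]
    {E : Type*} [NormedAddCommGroup E] [NormedSpace ℝ E]
    (g : E → A) (x : E) (e f : E) : A :=
  fderiv ℝ (fderiv ℝ g) x e f - fderiv ℝ g x e * Ring.inverse (g x) * fderiv ℝ g x f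

lemma curvB_expand {A : Type*} [NormedRing A] [NormedAlgebra ℝ A]
    {ι : Type*} [Fintype ι] [DecidableEq ι]
    (g : (ι → ℝ) → A) (x : ι → ℝ) (e f : ι → ℝ) :
    curvB g x e f = ∑ l, ∑ p, (e l * f p) • curvB g x (Pi.single l 1) (Pi.single p 1) := by
  have H : ∀ e : ι → ℝ, e = ∑ l, e l • (Pi.single l 1 : ι → ℝ) := fun e => pi_eq_sum_univ' e
  unfold curvB
  conv_lhs => rw [H e, H f]
  simp only [map_sum, map_smul, _root_.sum_apply, _root_.smul_apply, Finset.sum_mul,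
    Finset.mul_sum, smul_sub, Finset.sum_sub_distrib, smul_mul_assoc, mul_smul_comm, smul_smul,
    Finset.smul_sum]
  congr 1
  · rw [Finset.sum_comm]
    simp only [mul_comm]
  · rw [Finset.sum_comm]
    simp only [mul_comm]

lemma NK.ineq_iff {A : Type*} [NormedRing A] [NormedAlgebra ℝ A] [StarRing A]
    [ContinuousStar A] [StarModule ℝ A]
    {E : Type*} [NormedAddCommGroup E] [NormedSpace ℝ E] (τ : A →L[ℝ] ℝ)
    {g : E → A} (hg : Differentiable ℝ g) (sa : ∀ x, star (g x) = g x) (x : E)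
    (N : ℕ) (e : Fin N → E) (U : Fin N → A) :
    (∑ j, ∑ k, τ (star (U k) * fderiv ℝ (fderiv ℝ g) x (e k) (e j) * U j) ≤
      τ (star (∑ j, fderiv ℝ g x (e j) * U j) * Ring.inverse (g x) *
        ∑ j, fderiv ℝ g x (e j) * U j)) ↔
    ∑ j, ∑ k, τ (star (U k) * curvB g x (e k) (e j) * U j) ≤ 0 := by
  have R : τ (star (∑ j, fderiv ℝ g x (e j) * U j) * Ring.inverse (g x) *
        ∑ j, fderiv ℝ g x (e j) * U j) =
      ∑ j, ∑ k, τ (star (U k) * (fderiv ℝ g x (e k) * Ring.inverse (g x) *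
        fderiv ℝ g x (e j)) * U j) := by
    simp only [star_sum, Finset.sum_mul, Finset.mul_sum, map_sum, star_mul,
      fderiv_star_eq hg sa, mul_assoc]
  rw [R, ← sub_nonpos, ← Finset.sum_sub_distrib]
  simp only [← Finset.sum_sub_distrib, curvB, mul_sub, sub_mul, map_sub]

lemma curvB_star {A : Type*} [NormedRing A] [NormedAlgebra ℝ A] [StarRing A]
    [ContinuousStar A] [StarModule ℝ A]
    {E : Type*} [NormedAddCommGroup E] [NormedSpace ℝ E]
    {g : E → A} (hg : ContDiff ℝ 2 g) (sa : ∀ x, star (g x) = g x) (hu : ∀ x, IsUnit (g x))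
    (x e f : E) : star (curvB g x e f) = curvB g x f e := by
  have hd : Differentiable ℝ g := hg.differentiable (by norm_num)
  unfold curvB
  rw [star_sub, star_mul, star_mul, fderiv_star_eq hd sa, fderiv_star_eq hd sa,
    star_ringInverse (sa x) (hu x), fderiv2_star_eq hg sa, fderiv2_symm hg, mul_assoc]

lemma ip_Theta {ι : Type*} [Fintype ι] [DecidableEq ι] {r : ℕ}
    {g : (ι → ℝ) → Matrix (Fin r) (Fin r) ℂ} (hg : ContDiff ℝ 2 g) (hu : ∀ x, IsUnit (g x))
    (j k : ι) (x : ι → ℝ) (u v : Fin r → ℂ) :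
    ip (g x) ((Theta g j k x).mulVec u) v =
      star v ⬝ᵥ curvB g x (Pi.single k 1) (Pi.single j 1) *ᵥ u := by
  rw [ip, Matrix.mulVec_mulVec, g_mul_Theta hg hu]
  rfl

lemma NK.of_metric {ι : Type*} [Fintype ι] [DecidableEq ι] {r : ℕ}
    {g : (ι → ℝ) → Matrix (Fin r) (Fin r) ℂ} (hg : IsMetric g) (hn : NakanoLogConcave g) :
    NK (reTr r) g := by
  have hs : ContDiff ℝ 2 g := mat_contDiff.2 hg.2
  have sa : ∀ x, star (g x) = g x := fun x => (hg.1 x).isHermitian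
  have hu : ∀ x, IsUnit (g x) := fun x => (hg.1 x).isUnit
  refine ⟨hs, sa, ?_, ?_⟩
  · intro x X hX
    change 0 < (star X * g x * X).trace.re
    rw [trace_cols, Complex.re_sum]
    have hc : ∃ c, (fun a => X a c) ≠ 0 := by
      by_contra! h
      exact hX (by ext a c; exact congrFun (h c) a)
    obtain ⟨c, hc⟩ := hc
    refine Finset.sum_pos' (fun c _ => ?_) ⟨c, Finset.mem_univ _, ?_⟩
    · exact (Complex.le_def.1 ((hg.1 x).posSemidef.dotProduct_mulVec_nonneg _)).1
    · exact (Complex.lt_def.1 ((hg.1 x).dotProduct_mulVec_pos hc)).1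
  · intro x N e U
    refine (NK.ineq_iff (reTr r) (hs.differentiable (by norm_num)) sa x N e U).2 ?_
    have E1 := rank_two_expand (reTr r)
      (fun l p => curvB g x (Pi.single l 1) (Pi.single p 1)) e U
    have E2 : ∀ j k, curvB g x (e k) (e j) = ∑ l, ∑ p, (e k l * e j p) •
        curvB g x (Pi.single l 1) (Pi.single p 1) := fun j k => curvB_expand g x (e k) (e j)
    simp only [E2]
    refine E1.trans_le ?_
    simp only [reTr_apply, trace_cols, Complex.re_sum]
    set V : ι → Matrix (Fin r) (Fin r) ℂ := fun p => ∑ j, e j p • U j with hV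
    have key : ∀ c, ∑ p, ∑ l, (star (fun a => V l a c) ⬝ᵥ
        curvB g x (Pi.single l 1) (Pi.single p 1) *ᵥ (fun a => V p a c)).re ≤ 0 := by
      intro c
      have := (Complex.le_def.1 (hn x (fun l a => V l a c))).1
      simpa only [ip_Theta hs hu, Complex.re_sum, Complex.zero_re] using this
    calc _ = ∑ c, ∑ p, ∑ l, (star (fun a => V l a c) ⬝ᵥ
        curvB g x (Pi.single l 1) (Pi.single p 1) *ᵥ (fun a => V p a c)).re := by
          symm
          rw [Finset.sum_comm]
          exact Finset.sum_congr rfl fun p _ => Finset.sum_comm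
      _ ≤ 0 := Finset.sum_nonpos fun c _ => key c

lemma quad_star {r : ℕ} (M : Matrix (Fin r) (Fin r) ℂ) (u v : Fin r → ℂ) :
    star (star v ⬝ᵥ M *ᵥ u) = star u ⬝ᵥ (star M) *ᵥ v := by
  rw [Matrix.star_dotProduct, star_star, Matrix.star_mulVec, ← Matrix.dotProduct_mulVec]
  rfl

lemma reTr_const {r : ℕ} (M : Matrix (Fin r) (Fin r) ℂ) (u v : Fin r → ℂ) :
    reTr r (star (Matrix.of fun a (_ : Fin r) => v a) * M * (Matrix.of fun a (_ : Fin r) => u a))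
      = r * (star v ⬝ᵥ M *ᵥ u).re := by
  rw [reTr_apply, trace_cols, Complex.re_sum]
  simp [Finset.sum_const]

lemma NK.metric {ι : Type*} [Fintype ι] [DecidableEq ι] {r : ℕ}
    {g : (ι → ℝ) → Matrix (Fin r) (Fin r) ℂ} (h : NK (reTr r) g) :
    IsMetric g ∧ NakanoLogConcave g := by
  have hu : ∀ x, IsUnit (g x) := fun x => isUnit_of_pos (reTr r) (h.sa x) (h.pos x)
  have im0 : ∀ z : ℂ, star z = z → z.im = 0 := fun z hz => Complex.conj_eq_iff_im.1 hz
  refine ⟨⟨fun x => ?_, mat_contDiff.1 h.smooth⟩, fun x u => ?_⟩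
  · refine Matrix.PosDef.of_dotProduct_mulVec_pos (h.sa x) fun {v} hv => ?_
    rw [Complex.lt_def]
    refine ⟨?_, ?_⟩
    · obtain ⟨a, ha⟩ := Function.ne_iff.1 hv
      have := (h.pos x (Matrix.of fun a (_ : Fin r) => v a)
        (fun h0 => ha (congrFun (congrFun h0 a) a))).trans_eq (reTr_const _ _ _)
      exact pos_of_mul_pos_right this (Nat.cast_nonneg r)
    · refine (im0 _ ?_).symm
      rw [quad_star, h.sa x]
  · simp only [ip_Theta h.smooth hu]
    rw [Complex.le_def]
    refine ⟨?_, im0 _ ?_⟩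
    · rcases Nat.eq_zero_or_pos r with rfl | hr
      · simp [dotProduct]
      let φ := Fintype.equivFin ι
      have I := (NK.ineq_iff (reTr r) (h.smooth.differentiable (by norm_num)) h.sa x
        (Fintype.card ι) (fun i => Pi.single (φ.symm i) 1)
        (fun i => Matrix.of fun a (_ : Fin r) => u (φ.symm i) a)).1 (h.ineq x _ _ _)
      replace I := le_of_eq_of_le (Finset.sum_congr rfl fun j _ =>
        Finset.sum_congr rfl fun k _ => (reTr_const _ _ _).symm) I
      have I2 : ∑ j, ∑ k, (r : ℝ) * (star (u k) ⬝ᵥ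
          curvB g x (Pi.single k 1) (Pi.single j 1) *ᵥ (u j)).re ≤ 0 := by
        refine le_of_eq_of_le ?_ I
        rw [← Equiv.sum_comp φ.symm]
        refine Finset.sum_congr rfl fun j _ => ?_
        rw [← Equiv.sum_comp φ.symm]
      simp only [← Finset.mul_sum] at I2
      have hr' : (0 : ℝ) < r := Nat.cast_pos.2 hr
      simp only [Complex.re_sum, Complex.zero_re]
      exact nonpos_of_mul_nonpos_right I2 hr'
    · simp only [star_sum, quad_star]
      rw [Finset.sum_comm]
      refine Finset.sum_congr rfl fun j _ => Finset.sum_congr rfl fun k _ => ?_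
      have := curvB_star h.smooth h.sa hu x (Pi.single j 1) (Pi.single k 1)
      exact congrArg (fun Z => star (u k) ⬝ᵥ Z *ᵥ u j) this

lemma NK.fiber {A : Type*} [NormedRing A] [NormedAlgebra ℝ A] [StarRing A]
    [ContinuousStar A] [StarModule ℝ A] [FiniteDimensional ℝ A] [CompleteSpace A]
    {E : Type} [NormedAddCommGroup E] [NormedSpace ℝ E] [FiniteDimensional ℝ E] [ProperSpace E]
    [MeasurableSpace E] [BorelSpace E] (μ : Measure E) [μ.IsAddHaarMeasure]
    {τ : A →L[ℝ] ℝ} (hτ : ∀ x, τ (star x) = τ x) {σ : Type*} [Fintype σ] {S B : σ → A}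
    (rec : ∀ K : A, star K = K → K = ∑ i, τ (star (S i) * K * S i) • B i)
    {n : ℕ} {g : (Fin n → ℝ) × E → A} (h : NK τ g)
    (hint : ∀ t, Integrable fun y => g (y, t))
    (smooth : ContDiff ℝ 2 fun t => ∫ y, g (y, t)) :
    NK τ fun t => ∫ y, g (y, t) := by
  let s : ℕ → Set (Fin n → ℝ) := fun R => Icc (fun _ => -((R : ℝ) + 1)) (fun _ => (R : ℝ) + 1)
  have sm : ∀ R, MeasurableSet (s R) := fun R => measurableSet_Icc
  have smono : Monotone s := by
    intro R R' hRR
    have : (R : ℝ) ≤ R' := Nat.cast_le.2 hRR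
    refine Icc_subset_Icc (fun _ => ?_) (fun _ => ?_)
    · change -((R' : ℝ) + 1) ≤ -((R : ℝ) + 1)
      linarith
    · change (R : ℝ) + 1 ≤ (R' : ℝ) + 1
      linarith
  have sU : ⋃ R, s R = univ := by
    refine eq_univ_of_forall fun y => mem_iUnion.2 ?_
    obtain ⟨R, hR⟩ := exists_nat_ge ‖y‖
    refine ⟨R, ?_⟩
    have H : ∀ i, |y i| ≤ (R : ℝ) + 1 := fun i => by
      have := norm_le_pi_norm y i
      rw [Real.norm_eq_abs] at this
      linarith
    exact ⟨fun i => (abs_le.1 (H i)).1, fun i => (abs_le.1 (H i)).2⟩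
  let L : A → A →L[ℝ] ℝ := fun X =>
    τ ∘L (ContinuousLinearMap.mul ℝ A).flip X ∘L (ContinuousLinearMap.mul ℝ A (star X))
  have hL : ∀ X Y, L X Y = τ (star X * Y * X) := fun X Y => rfl
  have hI : ∀ (X : A) t, Integrable fun y => L X (g (y, t)) := fun X t =>
    (L X).integrable_comp (hint t)
  have hset : ∀ (X : A) t (u : Set (Fin n → ℝ)),
      τ (star X * (∫ y in u, g (y, t)) * X) = ∫ y in u, L X (g (y, t)) := fun X t u => by
    rw [← hL, ← (L X).integral_comp_comm ((hint t).integrableOn)]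
  have hfull : ∀ (X : A) t,
      τ (star X * (∫ y, g (y, t)) * X) = ∫ y, L X (g (y, t)) := fun X t => by
    rw [← hL, ← (L X).integral_comp_comm (hint t)]
  have nn : ∀ (X : A) t y, 0 ≤ L X (g (y, t)) := fun X t y => h.nonneg (y, t) X
  have hG : ∀ R : ℕ, NK τ (fun t => ∫ y in s R, g (y, t)) := fun R =>
    NK.box hτ (R := (R : ℝ) + 1) (by positivity) n h
  have hi : ∀ (R : ℕ) t X, τ (star X * (∫ y in s R, g (y, t)) * X) ≤
      τ (star X * (∫ y, g (y, t)) * X) := fun R t X => by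
    rw [hset, hfull]
    exact setIntegral_le_integral (hI X t) (Eventually.of_forall (nn X t))
  refine NK.limit μ rec hG smooth ?_ ?_ ?_ hi ?_
  · intro t
    have := ((starL' ℝ : A ≃L[ℝ] A) : A →L[ℝ] A).integral_comp_comm (hint t)
    refine this.symm.trans ?_
    refine integral_congr_ae (Eventually.of_forall fun y => ?_)
    exact h.sa (y, t)
  · intro t X hX
    exact ((hG 0).pos t X hX).trans_le (hi 0 t X)
  · intro R t X
    rw [hset, hset]
    exact setIntegral_mono_set ((hI X t).integrableOn) (Eventually.of_forall (nn X t))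
      (smono (Nat.zero_le R)).eventuallyLE
  · intro t
    have := tendsto_setIntegral_of_monotone sm smono
      (f := fun y => g (y, t)) (μ := volume) (hint t).integrableOn
    rwa [sU, Measure.restrict_univ] at this

lemma reTr_single {r : ℕ} (K : Matrix (Fin r) (Fin r) ℂ) (a b c : Fin r) (w z : ℂ) :
    (star (Matrix.single a c w) * K * Matrix.single b c z).trace = star w * K a b * z := by
  rw [Matrix.star_eq_conjTranspose, Matrix.conjTranspose_single, Matrix.single_mul_mul_single,
    Matrix.trace_single_eq_same]

/-- Test matrices for polarization. -/
noncomputable def polS {r : ℕ} : Fin r × Fin r × Fin 4 → Matrix (Fin r) (Fin r) ℂ :=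
  fun i => ![Matrix.single i.1 i.1 1 + Matrix.single i.2.1 i.1 1,
    Matrix.single i.1 i.1 1 + Matrix.single i.2.1 i.1 Complex.I,
    Matrix.single i.1 i.1 1, Matrix.single i.2.1 i.2.1 1] i.2.2

/-- Coefficient matrices for polarization. -/
noncomputable def polB {r : ℕ} : Fin r × Fin r × Fin 4 → Matrix (Fin r) (Fin r) ℂ :=
  fun i => Matrix.single i.1 i.2.1
    (![1 / 2, -(Complex.I / 2), -(1 / 2) + Complex.I / 2, -(1 / 2) + Complex.I / 2] i.2.2)

lemma pol_rec {r : ℕ} (K : Matrix (Fin r) (Fin r) ℂ) (hK : star K = K) :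
    K = ∑ i, reTr r (star (polS i) * K * polS i) • polB i := by
  have hs : ∀ a b, K b a = star (K a b) := fun a b => by
    conv_lhs => rw [← hK]
    rfl
  rw [Fintype.sum_prod_type]
  simp only [Fintype.sum_prod_type]
  conv_lhs => rw [Matrix.matrix_eq_sum_single K]
  refine Finset.sum_congr rfl fun a _ => Finset.sum_congr rfl fun b _ => ?_
  simp only [Fin.sum_univ_four, polS, polB, reTr_apply, Matrix.smul_single, ← Matrix.single_add,
    Matrix.cons_val, star_add, add_mul, mul_add, Matrix.trace_add, reTr_single]
  congr 1
  have h1 := hs a b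
  have h2 := hs a a
  have h3 := hs b b
  rw [Complex.ext_iff] at h1 h2 h3 ⊢
  simp at h1 h2 h3 ⊢
  constructor <;> nlinarith [h1.1, h1.2]

/-- Concatenation of coordinates as a continuous linear map. -/
noncomputable def elimL (n m : ℕ) :
    ((Fin n → ℝ) × (Fin m → ℝ)) →L[ℝ] ((Fin n ⊕ Fin m) → ℝ) :=
  LinearMap.toContinuousLinearMap
    { toFun := fun p => Sum.elim p.1 p.2
      map_add' := fun p q => by ext i; cases i <;> rfl
      map_smul' := fun c p => by ext i; cases i <;> rfl }

lemma fiber_main {n m r : ℕ}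
    (g : ((Fin n ⊕ Fin m) → ℝ) → Matrix (Fin r) (Fin r) ℂ)
    (hg : IsMetric g) (hnak : NakanoLogConcave g)
    (hint : ∀ (t : Fin m → ℝ) (a b : Fin r),
      Integrable fun y : Fin n → ℝ => g (Sum.elim y t) a b)
    (hC2 : ∀ a b : Fin r, ContDiff ℝ 2 fun t : Fin m → ℝ => fiberInt g t a b) :
    IsMetric (fiberInt g) ∧ NakanoLogConcave (fiberInt g) := by
  have h0 := (NK.of_metric hg hnak).comp_lin (elimL n m)
  have hi : ∀ t : Fin m → ℝ, Integrable fun y : Fin n → ℝ => g (elimL n m (y, t)) :=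
    fun t => mat_integrable (hint t)
  have hf : fiberInt g = fun t => ∫ y : Fin n → ℝ, g (elimL n m (y, t)) := by
    funext t
    ext a b
    exact ((entryL a b).integral_comp_comm (hi t))
  have hs : ContDiff ℝ 2 (fiberInt g) := mat_contDiff.2 hC2
  rw [hf] at hs
  have := NK.fiber (volume : Measure (Fin m → ℝ)) reTr_star pol_rec h0 hi hs
  rw [← hf] at this
  exact this.metric

end MatrixTranslation

theorem statement19 {n m r : ℕ}
    (g : ((Fin n ⊕ Fin m) → ℝ) → Matrix (Fin r) (Fin r) ℂ)
    (hg : IsMetric g) (hnak : NakanoLogConcave g)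
    (hint : ∀ (t : Fin m → ℝ) (a b : Fin r),
      Integrable fun y : Fin n → ℝ => g (Sum.elim y t) a b)
    (hC2 : ∀ a b : Fin r, ContDiff ℝ 2 fun t : Fin m → ℝ => fiberInt g t a b) :
    IsMetric (fiberInt g) ∧ NakanoLogConcave (fiberInt g) := by
  exact fiber_main g hg hnak hint hC2
end
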